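/- arXiv:alg-geom/9610006 — 4 statements merged into one kernel-verified Lean document; each statement's English description precedes it below -/
import Mathlib

section
/- Let I be a homogeneous unmixed ideal of projective dimension 0 in k[x_0,...,x_n] over a field k. Then the Hilbert function h_I satisfies h_I(m) ≥ m+1 for all m with 0 ≤ m ≤ deg I − 2, and h_I(m) = deg I for all m ≥ deg I − 1. -/
open MvPolynomial

/-- Integer-valued binomial coefficient `C(a, b)`, zero when `a < 0` or `a < b`. -/
def ichoose (a : ℤ) (b : ℕ) : ℤ := if a < 0 then 0 else (a.toNat).choose b

/-- The Hilbert function of a (homogeneous) ideal `I ⊆ k[x₀, …, xₙ]`: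
`m ↦ dim_k (k[x₀, …, xₙ]/I)_m`. -/
noncomputable def hilbF (k : Type*) [Field k] {n : ℕ}
    (I : Ideal (MvPolynomial (Fin (n+1)) k)) (m : ℕ) : ℕ :=
  Module.finrank k ((homogeneousSubmodule (Fin (n+1)) k m).map
    (Ideal.Quotient.mkₐ k I).toLinearMap)

open scoped Classical in
/-- The Hilbert polynomial of `I` (the polynomial agreeing with the Hilbert
function for all large `m`; junk value `0` if none exists). -/
noncomputable def hilbP (k : Type*) [Field k] {n : ℕ}
    (I : Ideal (MvPolynomial (Fin (n+1)) k)) : Polynomial ℚ :=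
  if h : ∃ P : Polynomial ℚ, ∀ᶠ m : ℕ in Filter.atTop,
      (hilbF k I m : ℚ) = P.eval (m : ℚ) then h.choose else 0

/-- The (algebraic) degree of a homogeneous ideal `I` of projective dimension
`d ≥ 0`: `d! · (leading coefficient of its Hilbert polynomial)`. -/
noncomputable def idealDeg (k : Type*) [Field k] {n : ℕ}
    (I : Ideal (MvPolynomial (Fin (n+1)) k)) : ℕ :=
  ⌊((hilbP k I).natDegree.factorial : ℚ) * (hilbP k I).leadingCoeff⌋₊

/-- The projective dimension of a homogeneous ideal `I` (of dimension `≥ 0`):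
the degree of its Hilbert polynomial. -/
noncomputable def idealDim (k : Type*) [Field k] {n : ℕ}
    (I : Ideal (MvPolynomial (Fin (n+1)) k)) : ℕ :=
  (hilbP k I).natDegree

/-- A homogeneous ideal: one containing all homogeneous components of its elements. -/
def IsHomogeneousIdeal {k : Type*} [Field k] {n : ℕ}
    (I : Ideal (MvPolynomial (Fin (n+1)) k)) : Prop :=
  ∀ f ∈ I, ∀ m : ℕ, homogeneousComponent m f ∈ I

/-- `I` is unmixed of projective dimension `d`: every associated prime `P` of
`k[x₀,…,xₙ]/I` satisfies `dim k[x₀,…,xₙ]/P = d + 1` (affine Krull dimension). -/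
def IsUnmixed (k : Type*) [Field k] {n : ℕ}
    (I : Ideal (MvPolynomial (Fin (n+1)) k)) (d : ℕ) : Prop :=
  ∀ P ∈ associatedPrimes (MvPolynomial (Fin (n+1)) k)
      (MvPolynomial (Fin (n+1)) k ⧸ I),
    ringKrullDim (MvPolynomial (Fin (n+1)) k ⧸ P) = ((d + 1 : ℕ) : WithBot (WithTop ℕ))

namespace Polynomial

attribute [local instance] Polynomial.algebra

lemma comb_aux (h : ℕ → ℕ) (D : ℕ) (hmono : ∀ m, h m ≤ h (m+1))
    (hst : ∀ m, h m = h (m+1) → h (m+1) = h (m+2)) (h0 : 1 ≤ h 0)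
    (hev : ∀ᶠ m in Filter.atTop, h m = D) :
    (∀ m, m + 2 ≤ D → m + 1 ≤ h m) ∧ (∀ m, D - 1 ≤ m → h m = D) := by
  obtain ⟨N, hN⟩ := Filter.eventually_atTop.1 hev
  have hm : Monotone h := monotone_nat_of_le_succ hmono
  have hle : ∀ m, h m ≤ D := fun m => by
    rw [← hN (max m N) (le_max_right _ _)]; exact hm (le_max_left _ _)
  have hconst : ∀ m, h m = h (m+1) → h m = D := by
    intro m hmm
    have key : ∀ j, h (m+j) = h (m+j+1) := by
      intro j
      induction j with
      | zero => exact hmm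
      | succ j ih => exact hst _ ih
    have key2 : ∀ j, h (m+j) = h m := by
      intro j
      induction j with
      | zero => rfl
      | succ j ih => rw [← ih]; exact (key j).symm
    rw [← key2 N]; exact hN _ (by omega)
  have hmin : ∀ m, min (m+1) D ≤ h m := by
    intro m
    induction m with
    | zero => omega
    | succ m ih =>
      rcases (hmono m).eq_or_lt with he | hl
      · have := hconst m he; omega
      · omega
  constructor
  · intro m h2; have := hmin m; omega
  · intro m h2; have := hmin m; have := hle m; omega

lemma torsion_aux {R M : Type*} [CommRing R] [IsDomain R] [AddCommGroup M] [Module R M]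
    (L N : Submodule R M) (hLN : L ≤ N) [Module.Finite R N] :
    Module.finrank R L = Module.finrank R N ↔ ∀ x ∈ N, ∃ q : R, q ≠ 0 ∧ q • x ∈ L := by
  have h1 := Submodule.finrank_quotient_add_finrank (L.submoduleOf N)
  have h2 : Module.finrank R (L.submoduleOf N) = Module.finrank R L :=
    (Submodule.submoduleOfEquivOfLe hLN).finrank_eq
  have h3 : Module.finrank R L = Module.finrank R N ↔
      Module.finrank R (N ⧸ L.submoduleOf N) = 0 := by omega
  rw [h3, Module.finrank_eq_zero_iff]
  constructor
  · intro h x hx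
    obtain ⟨a, ha, hax⟩ := h (Submodule.Quotient.mk ⟨x, hx⟩)
    refine ⟨a, ha, ?_⟩
    rw [← Submodule.Quotient.mk_smul, Submodule.Quotient.mk_eq_zero] at hax
    exact hax
  · intro h y
    obtain ⟨⟨x, hx⟩, rfl⟩ := Submodule.Quotient.mk_surjective _ y
    obtain ⟨a, ha, hax⟩ := h x hx
    refine ⟨a, ha, ?_⟩
    rw [← Submodule.Quotient.mk_smul, Submodule.Quotient.mk_eq_zero]
    exact hax

section
variable {k A : Type*} [Field k] [CommRing A] [Algebra k A]

lemma smul_C_coeff (p : k[X]) (a : A) (j : ℕ) : (p • (C a : A[X])).coeff j = p.coeff j • a := by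
  rw [Algebra.smul_def, coeff_mul_C, Algebra.smul_def]
  congr 1
  exact coeff_map _ _

/-- extension of a `k`-subspace to polynomials -/
noncomputable def polyExt (W : Submodule k A) : Submodule k[X] A[X] := Submodule.span k[X] (C '' (W : Set A))

lemma C_mem_polyExt {W : Submodule k A} {a : A} (h : a ∈ W) : C a ∈ polyExt W :=
  Submodule.subset_span ⟨a, h, rfl⟩

lemma C_smul_C (c : k) (a : A) : (C (c • a) : A[X]) = (C c : k[X]) • (C a : A[X]) := by
  ext j
  rw [smul_C_coeff, coeff_C, coeff_C]
  split_ifs <;> simp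

lemma polyExt_span (s : Set A) : polyExt (Submodule.span k s) = Submodule.span k[X] (C '' s) := by
  apply le_antisymm
  · apply Submodule.span_le.2
    rintro _ ⟨a, ha, rfl⟩
    induction ha using Submodule.span_induction with
    | mem x hx => exact Submodule.subset_span ⟨x, hx, rfl⟩
    | zero => simp
    | add x y _ _ hx hy => rw [C_add]; exact add_mem hx hy
    | smul c x _ hx => rw [C_smul_C]; exact Submodule.smul_mem _ _ hx
  · exact Submodule.span_mono (Set.image_mono Submodule.subset_span)

lemma polyExt_fin_rank (W : Submodule k A) [Module.Finite k W] :
    Module.Finite k[X] (polyExt W) ∧ Module.finrank k[X] (polyExt W) = Module.finrank k W := by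
  let b := Module.finBasis k W
  have hW : W = Submodule.span k (Set.range fun i => (b i : A)) := by
    have := congrArg (Submodule.map W.subtype) b.span_eq
    rw [Submodule.map_span, Submodule.map_top, Submodule.range_subtype, ← Set.range_comp] at this
    exact this.symm
  have hE : polyExt W = Submodule.span k[X] (Set.range fun i => (C (b i : A) : A[X])) := by
    conv_lhs => rw [hW]
    rw [polyExt_span, ← Set.range_comp]; rfl
  have hli : LinearIndependent k[X] (fun i => (C (b i : A) : A[X])) := by
    rw [Fintype.linearIndependent_iff]
    intro g hg i
    ext j
    have h1 : ∑ i, (g i).coeff j • (b i : A) = 0 := by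
      have := congrArg (fun p : A[X] => p.coeff j) hg
      simpa [finsetSum_coeff, smul_C_coeff] using this
    have hb : LinearIndependent k (fun i => (b i : A)) :=
      b.linearIndependent.map' W.subtype (Submodule.ker_subtype _)
    simpa using Fintype.linearIndependent_iff.1 hb _ h1 i
  rw [hE]
  refine ⟨Module.Finite.span_of_finite _ (Set.finite_range _), ?_⟩
  rw [finrank_span_eq_card hli, Fintype.card_fin]

lemma chain_aux {n : ℕ} (x : Fin n → A) (hx : ∀ a : A, (∀ i, a * x i = 0) → a = 0)
    (V : Submodule k A) (hV : V = Submodule.span k (Set.range x))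
    [∀ m : ℕ, Module.Finite k (V ^ m : Submodule k A)] :
    (∀ m : ℕ, Module.finrank k (V ^ m : Submodule k A) ≤
      Module.finrank k (V ^ (m+1) : Submodule k A)) ∧
    (∀ m : ℕ, Module.finrank k (V ^ m : Submodule k A) =
      Module.finrank k (V ^ (m+1) : Submodule k A) →
      Module.finrank k (V ^ (m+1) : Submodule k A) =
      Module.finrank k (V ^ (m+2) : Submodule k A)) := by
  have hxV : ∀ i, x i ∈ V := fun i => hV ▸ Submodule.subset_span ⟨i, rfl⟩
  let f : A[X] := ∑ i, C (x i) * X ^ (i : ℕ)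
  have hf : f ∈ nonZeroDivisors A[X] := by
    rw [Polynomial.mem_nonZeroDivisors_iff]
    intro a ha
    apply hx
    intro i
    have := congrArg (fun p : A[X] => p.coeff i) ha
    simpa [f, finsetSum_coeff, coeff_X_pow, Fin.val_inj] using this
  let F : A[X] →ₗ[k[X]] A[X] := LinearMap.mulLeft k[X] f
  have hF : Function.Injective F := by
    intro a b hab
    exact (mul_cancel_left_mem_nonZeroDivisors hf).1 hab
  let M : ℕ → Submodule k[X] A[X] := fun m => polyExt (V ^ m)
  have hfin : ∀ m, Module.Finite k[X] (M m) := fun m => (polyExt_fin_rank (V ^ m)).1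
  have hrk : ∀ m : ℕ, Module.finrank k (V ^ m : Submodule k A) = Module.finrank k[X] (M m) :=
    fun m => (polyExt_fin_rank (V ^ m)).2.symm
  -- multiplication by `x i` raises degree
  have hmulx : ∀ m i p, p ∈ M m → C (x i) * p ∈ M (m+1) := by
    intro m i p hp
    induction hp using Submodule.span_induction with
    | mem y hy =>
      obtain ⟨a, ha, rfl⟩ := hy
      rw [← C_mul]
      apply C_mem_polyExt
      rw [pow_succ']
      exact Submodule.mul_mem_mul (hxV i) ha
    | zero => simp
    | add y z _ _ hy hz => rw [mul_add]; exact add_mem hy hz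
    | smul c y _ hy => rw [mul_smul_comm]; exact Submodule.smul_mem _ _ hy
  have hXmul : ∀ m j p, p ∈ M m → X ^ j * p ∈ M m := by
    intro m j p hp
    have : X ^ j * p = (X ^ j : k[X]) • p := by
      rw [Algebra.smul_def]
      congr 1
      exact (by simp : (X ^ j : A[X]) = Polynomial.map (algebraMap k A) (X ^ j))
    rw [this]
    exact Submodule.smul_mem _ _ hp
  have hle : ∀ m, (M m).map F ≤ M (m+1) := by
    rintro m _ ⟨p, hp, rfl⟩
    change f * p ∈ _
    simp only [f, Finset.sum_mul]
    refine sum_mem fun i _ => ?_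
    rw [mul_assoc]
    exact hmulx _ _ _ (hXmul _ _ _ hp)
  have hrF : ∀ m, Module.finrank k[X] ((M m).map F) = Module.finrank k[X] (M m) := fun m =>
    (Submodule.equivMapOfInjective F hF (M m)).finrank_eq.symm
  refine ⟨fun m => ?_, fun m hm => ?_⟩
  · rw [hrk, hrk, ← hrF]
    exact Submodule.finrank_mono (hle m)
  · rw [hrk, hrk, ← hrF, torsion_aux _ _ (hle m)] at hm
    rw [hrk, hrk, ← hrF, torsion_aux _ _ (hle (m+1))]
    intro p hp
    have hsm : ∀ (q : k[X]) (p : A[X]), q • p ∈ (M (m+1)).map F →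
        ∀ r : k[X], (r * q) • p ∈ (M (m+1)).map F := by
      intro q p h r
      rw [mul_smul]; exact Submodule.smul_mem _ _ h
    have hadd : ∀ y z : A[X], (∃ q : k[X], q ≠ 0 ∧ q • y ∈ (M (m+1)).map F) →
        (∃ q : k[X], q ≠ 0 ∧ q • z ∈ (M (m+1)).map F) →
        (∃ q : k[X], q ≠ 0 ∧ q • (y + z) ∈ (M (m+1)).map F) := by
      rintro y z ⟨q, hq, hqy⟩ ⟨r, hr, hrz⟩
      refine ⟨r * q, mul_ne_zero hr hq, ?_⟩
      rw [smul_add]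
      refine add_mem (hsm _ _ hqy r) ?_
      rw [mul_comm]; exact hsm _ _ hrz q
    have hsmul : ∀ (c : k[X]) (y : A[X]), (∃ q : k[X], q ≠ 0 ∧ q • y ∈ (M (m+1)).map F) →
        (∃ q : k[X], q ≠ 0 ∧ q • (c • y) ∈ (M (m+1)).map F) := by
      rintro c y ⟨q, hq, hqy⟩
      refine ⟨q, hq, ?_⟩
      rw [smul_comm]; exact Submodule.smul_mem _ _ hqy
    have hzero : ∃ q : k[X], q ≠ 0 ∧ q • (0 : A[X]) ∈ (M (m+1)).map F :=
      ⟨1, one_ne_zero, by simp⟩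
    induction hp using Submodule.span_induction with
    | zero => exact hzero
    | add y z _ _ hy hz => exact hadd _ _ hy hz
    | smul c y _ hy => exact hsmul _ _ hy
    | mem y hy =>
      obtain ⟨a, ha, rfl⟩ := hy
      have ha' : a ∈ V * V ^ (m+1) := by rw [← pow_succ']; exact ha
      clear ha
      induction ha' using Submodule.mul_induction_on' with
      | add y _ z _ hy hz => rw [C_add]; exact hadd _ _ hy hz
      | mem_mul_mem v hv w hw =>
        rw [hV] at hv
        induction hv using Submodule.span_induction with
        | zero => simpa using hzero
        | add y z _ _ hy hz => rw [add_mul, C_add]; exact hadd _ _ hy hz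
        | smul c y _ hy => rw [smul_mul_assoc, C_smul_C]; exact hsmul _ _ hy
        | mem v hv =>
          obtain ⟨i, rfl⟩ := hv
          obtain ⟨q, hq, u, hu, hqu⟩ := hm (C w) (C_mem_polyExt hw)
          refine ⟨q, hq, C (x i) * u, hmulx _ _ _ hu, ?_⟩
          change f * (C (x i) * u) = _
          change f * u = _ at hqu
          rw [mul_left_comm, hqu, C_mul, mul_smul_comm]
end

end Polynomial


lemma hilbP_spec {k : Type*} [Field k] {n : ℕ}
    (I : Ideal (MvPolynomial (Fin (n+1)) k)) (hne : hilbP k I ≠ 0)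
    (hdim : idealDim k I = 0) :
    1 ≤ idealDeg k I ∧ ∀ᶠ m in Filter.atTop, hilbF k I m = idealDeg k I := by
  classical
  have hev : ∀ᶠ m : ℕ in Filter.atTop, (hilbF k I m : ℚ) = (hilbP k I).eval (m : ℚ) := by
    by_cases h : ∃ P : Polynomial ℚ, ∀ᶠ m : ℕ in Filter.atTop,
      (hilbF k I m : ℚ) = P.eval (m : ℚ)
    · have : hilbP k I = h.choose := by unfold hilbP; rw [dif_pos h]
      rw [this]; exact h.choose_spec
    · exact absurd (by unfold hilbP; rw [dif_neg h]) hne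
  unfold idealDim at hdim
  obtain ⟨c, hc⟩ := Polynomial.natDegree_eq_zero.1 hdim
  have hc0 : c ≠ 0 := by rintro rfl; simp at hc; exact hne hc.symm
  have hdeg : idealDeg k I = ⌊c⌋₊ := by
    unfold idealDeg; rw [hdim, ← hc]; simp
  rw [← hc] at hev
  simp only [Polynomial.eval_C] at hev
  have hev2 : ∀ᶠ m in Filter.atTop, hilbF k I m = idealDeg k I := by
    filter_upwards [hev] with m hm
    rw [hdeg, ← hm, Nat.floor_natCast]
  refine ⟨?_, hev2⟩
  obtain ⟨m, hm, hm2⟩ := (hev.and hev2).exists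
  rw [← hm2]
  refine Nat.one_le_iff_ne_zero.2 fun h => hc0 ?_
  rw [← hm, h]; simp

lemma no_socle {k : Type*} [Field k] {n : ℕ}
    (I : Ideal (MvPolynomial (Fin (n+1)) k)) (hunm : IsUnmixed k I 0)
    (a : MvPolynomial (Fin (n+1)) k ⧸ I)
    (ha : ∀ i, a * Ideal.Quotient.mk I (X i) = 0) : a = 0 := by
  by_contra hne
  obtain ⟨P, hP, hle⟩ := exists_le_isAssociatedPrime_of_isNoetherianRing
    (MvPolynomial (Fin (n+1)) k) a hne
  have hX : ∀ i, (X i : MvPolynomial (Fin (n+1)) k) ∈ P := fun i => hle (by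
    rw [Submodule.mem_colon_singleton, Submodule.mem_bot]
    have h := ha i
    obtain ⟨p, rfl⟩ := Ideal.Quotient.mk_surjective a
    rw [mul_comm, ← map_mul] at h
    exact h)
  have hd := hunm P hP
  have hsurj : Function.Surjective (algebraMap k (MvPolynomial (Fin (n+1)) k ⧸ P)) := by
    intro y
    obtain ⟨p, rfl⟩ := Ideal.Quotient.mk_surjective y
    induction p using MvPolynomial.induction_on with
    | C c => exact ⟨c, rfl⟩
    | add p q hp hq =>
      obtain ⟨c, hc⟩ := hp
      obtain ⟨d, hd⟩ := hq
      exact ⟨c + d, by rw [map_add, map_add, hc, hd]⟩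
    | mul_X p i _ =>
      exact ⟨0, by rw [map_zero, map_mul, Ideal.Quotient.eq_zero_iff_mem.2 (hX i), mul_zero]⟩
  have h2 := ringKrullDim_le_of_surjective _ hsurj
  rw [hd, ringKrullDim_eq_zero_of_field] at h2
  have h3 : ((1 : ℕ) : WithBot (WithTop ℕ)) ≤ ((0 : ℕ) : WithBot (WithTop ℕ)) := h2
  have h4 : ¬ (1 : ℕ) ≤ 0 := by norm_num
  exact h4 (by exact_mod_cast h3)

/-- lower bound and stabilization of the Hilbert function of a
homogeneous unmixed ideal of projective dimension `0`. -/
theorem hilbert_function_dim_zero_unmixed {k : Type*} [Field k] {n : ℕ}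
    (I : Ideal (MvPolynomial (Fin (n+1)) k))
    (hhom : IsHomogeneousIdeal I) (hne : hilbP k I ≠ 0)
    (hdim : idealDim k I = 0) (hunm : IsUnmixed k I 0) :
    (∀ m : ℕ, m + 2 ≤ idealDeg k I → m + 1 ≤ hilbF k I m) ∧
      (∀ m : ℕ, idealDeg k I - 1 ≤ m → hilbF k I m = idealDeg k I) := by
  obtain ⟨hD, hev⟩ := hilbP_spec I hne hdim
  set V : Submodule k (MvPolynomial (Fin (n+1)) k ⧸ I) :=
    (homogeneousSubmodule (Fin (n+1)) k 1).map (Ideal.Quotient.mkₐ k I).toLinearMap with hVdef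
  have hV : V = Submodule.span k (Set.range fun i => Ideal.Quotient.mk I (X i)) := by
    rw [hVdef, homogeneousSubmodule_one_eq_span_X, Submodule.map_span, ← Set.range_comp]
    rfl
  have hVm : ∀ m : ℕ, (homogeneousSubmodule (Fin (n+1)) k m).map
      (Ideal.Quotient.mkₐ k I).toLinearMap = V ^ m := by
    intro m
    rw [← homogeneousSubmodule_one_pow, Submodule.map_pow]
  have hh : ∀ m : ℕ, hilbF k I m = Module.finrank k (V ^ m : Submodule k _) := by
    intro m
    rw [hilbF, hVm]
  have hfin : ∀ m : ℕ, Module.Finite k (V ^ m : Submodule k _) := by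
    intro m
    rw [← hVm]
    exact Module.Finite.iff_fg.2 ((homogeneousSubmodule_fg _ _ m).map _)
  obtain ⟨h1, h2⟩ := Polynomial.chain_aux (fun i => Ideal.Quotient.mk I (X i))
    (no_socle I hunm) V hV
  refine Polynomial.comb_aux (hilbF k I) (idealDeg k I) ?_ ?_ ?_ hev
  · intro m; rw [hh, hh]; exact h1 m
  · intro m; rw [hh, hh, hh]; exact h2 m
  · by_contra hlt
    have h0 : Module.finrank k (V ^ 0 : Submodule k _) = 0 := by rw [← hh]; omega
    rw [Submodule.finrank_eq_zero, pow_zero] at h0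
    have h10 : (1 : MvPolynomial (Fin (n+1)) k ⧸ I) = 0 := by
      rw [← Submodule.mem_bot k, ← h0]; exact Submodule.one_le.1 le_rfl
    have hsub : Subsingleton (MvPolynomial (Fin (n+1)) k ⧸ I) :=
      subsingleton_of_zero_eq_one h10.symm
    obtain ⟨m, hm⟩ := hev.exists
    rw [hh, Module.finrank_zero_of_subsingleton] at hm
    omega
end

section
/- Let I be a homogeneous ideal of projective dimension d ≥ 0 in k[x_0,...,x_n] over a field k. Then for all m ≥ 1, the Hilbert function satisfies h_I(m) ≥ C(m+d+1, d+1) − C(m − deg I + d + 1, d+1). -/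
open MvPolynomial

theorem HB.hom_span {k : Type*} [Field k] {n : ℕ} (s : Set (MvPolynomial (Fin (n+1)) k))
    (hs : ∀ x ∈ s, ∃ i, x.IsHomogeneous i) : IsHomogeneousIdeal (Ideal.span s) := by
  let := MvPolynomial.gradedAlgebra (σ := Fin (n+1)) (R := k)
  intro f hf m
  exact homogeneousComponent_mem_of_mem (Ideal.homogeneous_span _ s hs) hf m

theorem HB.hom_sup {k : Type*} [Field k] {n : ℕ} {I J : Ideal (MvPolynomial (Fin (n+1)) k)}
    (hI : IsHomogeneousIdeal I) (hJ : IsHomogeneousIdeal J) : IsHomogeneousIdeal (I ⊔ J) := by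
  intro f hf m
  obtain ⟨a, ha, b, hb, rfl⟩ := Submodule.mem_sup.1 hf
  rw [map_add]
  exact Submodule.add_mem_sup (hI a ha m) (hJ b hb m)

theorem HB.hc_mul {k : Type*} [Field k] {n : ℕ} {l : MvPolynomial (Fin (n+1)) k} {a : ℕ}
    (hl : l.IsHomogeneous a) (r : MvPolynomial (Fin (n+1)) k) (m : ℕ) :
    homogeneousComponent (m + a) (l * r) = l * homogeneousComponent m r := by
  conv_lhs => rw [← sum_homogeneousComponent r, Finset.mul_sum, map_sum]
  conv_rhs => rw [← sum_homogeneousComponent r, map_sum, Finset.mul_sum]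
  refine Finset.sum_congr rfl fun i _ => ?_
  have h1 : (l * homogeneousComponent i r) ∈ homogeneousSubmodule (Fin (n+1)) k (a + i) :=
    hl.mul (homogeneousComponent_isHomogeneous i r)
  rw [homogeneousComponent_of_mem h1,
    homogeneousComponent_of_mem (homogeneousComponent_mem i r)]
  by_cases h : m = i
  · subst h; simp [add_comm]
  · have : m + a ≠ a + i := by omega
    simp [h, this]

theorem HB.hc_mul_lt {k : Type*} [Field k] {n : ℕ} {l : MvPolynomial (Fin (n+1)) k} {a : ℕ}
    (hl : l.IsHomogeneous a) (r : MvPolynomial (Fin (n+1)) k) {m : ℕ} (hm : m < a) :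
    homogeneousComponent m (l * r) = 0 := by
  conv_lhs => rw [← sum_homogeneousComponent r, Finset.mul_sum, map_sum]
  refine Finset.sum_eq_zero fun i _ => ?_
  have h1 : (l * homogeneousComponent i r) ∈ homogeneousSubmodule (Fin (n+1)) k (a + i) :=
    hl.mul (homogeneousComponent_isHomogeneous i r)
  rw [homogeneousComponent_of_mem h1, if_neg (by omega)]

instance HB.fin_hs {k : Type*} [Field k] {n : ℕ} (m : ℕ) :
    Module.Finite k (homogeneousSubmodule (Fin (n+1)) k m) :=
  Module.Finite.iff_fg.2 (homogeneousSubmodule_fg _ _ m)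

/-- the graded piece -/
noncomputable abbrev HB.Q (k : Type*) [Field k] {n : ℕ}
    (I : Ideal (MvPolynomial (Fin (n+1)) k)) (m : ℕ) :
    Submodule k (MvPolynomial (Fin (n+1)) k ⧸ I) :=
  (homogeneousSubmodule (Fin (n+1)) k m).map (Ideal.Quotient.mkₐ k I).toLinearMap

theorem HB.mem_Q {k : Type*} [Field k] {n : ℕ}
    {I : Ideal (MvPolynomial (Fin (n+1)) k)} {m : ℕ} {q : MvPolynomial (Fin (n+1)) k ⧸ I} :
    q ∈ HB.Q k I m ↔ ∃ s : MvPolynomial (Fin (n+1)) k, s.IsHomogeneous m ∧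
      Ideal.Quotient.mk I s = q := by
  simp [HB.Q, Submodule.mem_map, mem_homogeneousSubmodule]

/-- the transition map -/
noncomputable def HB.fac (k : Type*) [Field k] {n : ℕ}
    {I J : Ideal (MvPolynomial (Fin (n+1)) k)} (h : I ≤ J) :
    (MvPolynomial (Fin (n+1)) k ⧸ I) →ₗ[k] (MvPolynomial (Fin (n+1)) k ⧸ J) :=
  (Ideal.Quotient.factorₐ k h).toLinearMap

theorem HB.fac_mk {k : Type*} [Field k] {n : ℕ}
    {I J : Ideal (MvPolynomial (Fin (n+1)) k)} (h : I ≤ J) (s : MvPolynomial (Fin (n+1)) k) :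
    HB.fac k h (Ideal.Quotient.mk I s) = Ideal.Quotient.mk J s := by
  simp [HB.fac]

theorem HB.Q_map {k : Type*} [Field k] {n : ℕ}
    {I J : Ideal (MvPolynomial (Fin (n+1)) k)} (h : I ≤ J) (m : ℕ) :
    (HB.Q k I m).map (HB.fac k h) = HB.Q k J m := by
  ext q
  simp only [Submodule.mem_map]
  constructor
  · rintro ⟨_, ⟨s, hs, rfl⟩, rfl⟩
    exact ⟨s, hs, (HB.fac_mk h s).symm⟩
  · rintro ⟨s, hs, rfl⟩
    exact ⟨_, ⟨s, hs, rfl⟩, HB.fac_mk h s⟩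

theorem HB.mono {k : Type*} [Field k] {n : ℕ}
    {I J : Ideal (MvPolynomial (Fin (n+1)) k)} (h : I ≤ J) (m : ℕ) :
    hilbF k J m ≤ hilbF k I m := by
  change Module.finrank k (HB.Q k J m) ≤ Module.finrank k (HB.Q k I m)
  rw [← HB.Q_map h m]
  exact Submodule.finrank_map_le _ _

theorem HB.eq_of {k : Type*} [Field k] {n : ℕ}
    {I J : Ideal (MvPolynomial (Fin (n+1)) k)} (h : I ≤ J) (m : ℕ)
    (hm : ∀ s : MvPolynomial (Fin (n+1)) k, s.IsHomogeneous m → s ∈ J → s ∈ I) :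
    hilbF k J m = hilbF k I m := by
  change Module.finrank k (HB.Q k J m) = Module.finrank k (HB.Q k I m)
  rw [← HB.Q_map h m]
  have hinj : Function.Injective ((HB.fac k h).domRestrict (HB.Q k I m)) := by
    rw [← LinearMap.ker_eq_bot, LinearMap.ker_eq_bot']
    rintro ⟨q, hq⟩ h0
    obtain ⟨s, hs, rfl⟩ := HB.mem_Q.1 hq
    rw [LinearMap.domRestrict_apply, HB.fac_mk, Ideal.Quotient.eq_zero_iff_mem] at h0
    exact Subtype.ext (Ideal.Quotient.eq_zero_iff_mem.2 (hm s hs h0))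
  rw [← LinearMap.range_domRestrict]
  exact LinearMap.finrank_range_of_inj hinj

theorem HB.zero_iff {k : Type*} [Field k] {n : ℕ}
    {I : Ideal (MvPolynomial (Fin (n+1)) k)} {m : ℕ} :
    hilbF k I m = 0 ↔ ∀ s : MvPolynomial (Fin (n+1)) k, s.IsHomogeneous m → s ∈ I := by
  change Module.finrank k (HB.Q k I m) = 0 ↔ _
  rw [Submodule.finrank_eq_zero, Submodule.eq_bot_iff]
  constructor
  · intro h s hs
    exact Ideal.Quotient.eq_zero_iff_mem.1 (h _ (HB.mem_Q.2 ⟨s, hs, rfl⟩))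
  · intro h q hq
    obtain ⟨s, hs, rfl⟩ := HB.mem_Q.1 hq
    exact Ideal.Quotient.eq_zero_iff_mem.2 (h s hs)

theorem HB.zero_succ {k : Type*} [Field k] {n : ℕ}
    {I : Ideal (MvPolynomial (Fin (n+1)) k)} {m : ℕ} (h : hilbF k I m = 0) :
    hilbF k I (m+1) = 0 := by
  rw [HB.zero_iff] at *
  intro s hs
  have : s ∈ homogeneousSubmodule (Fin (n+1)) k 1 ^ (m+1) := by
    rw [homogeneousSubmodule_one_pow]; exact hs
  rw [pow_succ, homogeneousSubmodule_one_pow] at this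
  refine Submodule.mul_induction_on this (fun a ha b _ => I.mul_mem_right _ (h a ha))
    (fun _ _ => I.add_mem)

theorem HB.exact {k : Type*} [Field k] {n : ℕ}
    {J : Ideal (MvPolynomial (Fin (n+1)) k)} (hJ : IsHomogeneousIdeal J)
    {l : MvPolynomial (Fin (n+1)) k} (hl : l.IsHomogeneous 1)
    (hreg : ∀ f, l * f ∈ J → f ∈ J) (m : ℕ) :
    hilbF k J (m+1) = hilbF k (J ⊔ Ideal.span {l}) (m+1) + hilbF k J m := by
  have hle : J ≤ J ⊔ Ideal.span {l} := le_sup_left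
  have hrn := LinearMap.finrank_range_add_finrank_ker
    ((HB.fac k hle).domRestrict (HB.Q k J (m+1)))
  rw [LinearMap.range_domRestrict, HB.Q_map] at hrn
  change Module.finrank k (HB.Q k J (m+1)) = Module.finrank k (HB.Q k _ (m+1)) +
    Module.finrank k (HB.Q k J m)
  rw [← hrn]
  congr 1
  set L : (MvPolynomial (Fin (n+1)) k ⧸ J) →ₗ[k] (MvPolynomial (Fin (n+1)) k ⧸ J) :=
    LinearMap.mulLeft k (Ideal.Quotient.mk J l) with hL
  have hLinj : Function.Injective L := by
    rw [← LinearMap.ker_eq_bot, LinearMap.ker_eq_bot']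
    intro q hq
    obtain ⟨f, rfl⟩ := Ideal.Quotient.mk_surjective q
    rw [hL, LinearMap.mulLeft_apply, ← map_mul, Ideal.Quotient.eq_zero_iff_mem] at hq
    exact Ideal.Quotient.eq_zero_iff_mem.2 (hreg f hq)
  rw [(Submodule.equivMapOfInjective L hLinj (HB.Q k J m)).finrank_eq]
  rw [(Submodule.equivMapOfInjective (HB.Q k J (m+1)).subtype (Submodule.subtype_injective _)
    _).finrank_eq]
  suffices h : Submodule.map (HB.Q k J (m+1)).subtype
      (LinearMap.ker ((HB.fac k hle).domRestrict (HB.Q k J (m+1)))) =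
      Submodule.map L (HB.Q k J m) by rw [h]
  ext q
  constructor
  · rintro ⟨⟨q, hq⟩, h0, rfl⟩
    obtain ⟨s, hs, rfl⟩ := HB.mem_Q.1 hq
    rw [SetLike.mem_coe, LinearMap.mem_ker, LinearMap.domRestrict_apply, HB.fac_mk,
      Ideal.Quotient.eq_zero_iff_mem] at h0
    obtain ⟨a, ha, b, hb, rfl⟩ := Submodule.mem_sup.1 h0
    obtain ⟨r, rfl⟩ := Ideal.mem_span_singleton.1 hb
    refine ⟨Ideal.Quotient.mk J (homogeneousComponent m r),
      HB.mem_Q.2 ⟨_, homogeneousComponent_isHomogeneous m r, rfl⟩, ?_⟩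
    rw [hL, LinearMap.mulLeft_apply, ← map_mul, ← HB.hc_mul hl]
    have h2 := homogeneousComponent_eq_self hs
    rw [map_add] at h2
    change _ = Ideal.Quotient.mk J (a + l * r)
    rw [← h2, map_add, Ideal.Quotient.eq_zero_iff_mem.2 (hJ a ha (m+1)), zero_add]
  · rintro ⟨q, hq, rfl⟩
    obtain ⟨s, hs, rfl⟩ := HB.mem_Q.1 hq
    have h3 : L (Ideal.Quotient.mk J s) = Ideal.Quotient.mk J (l * s) := by
      rw [hL, LinearMap.mulLeft_apply, ← map_mul]
    have h4 : Ideal.Quotient.mk J (l * s) ∈ HB.Q k J (m+1) :=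
      HB.mem_Q.2 ⟨_, add_comm 1 m ▸ hl.mul hs, rfl⟩
    rw [h3]
    refine ⟨⟨_, h4⟩, ?_, rfl⟩
    rw [SetLike.mem_coe, LinearMap.mem_ker, LinearMap.domRestrict_apply, HB.fac_mk,
      Ideal.Quotient.eq_zero_iff_mem]
    exact Ideal.mem_sup_right (Ideal.mul_mem_right _ _ (Ideal.mem_span_singleton_self l))

theorem HB.exact_zero {k : Type*} [Field k] {n : ℕ}
    {J : Ideal (MvPolynomial (Fin (n+1)) k)} (hJ : IsHomogeneousIdeal J)
    {l : MvPolynomial (Fin (n+1)) k} (hl : l.IsHomogeneous 1) :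
    hilbF k (J ⊔ Ideal.span {l}) 0 = hilbF k J 0 := by
  refine HB.eq_of le_sup_left 0 fun s hs h => ?_
  obtain ⟨a, ha, b, hb, rfl⟩ := Submodule.mem_sup.1 h
  obtain ⟨r, rfl⟩ := Ideal.mem_span_singleton.1 hb
  have h2 := homogeneousComponent_eq_self hs
  rw [map_add, HB.hc_mul_lt hl r one_pos, add_zero] at h2
  rw [← h2]
  exact hJ a ha 0

theorem HB.exists_sat {k : Type*} [Field k] {n : ℕ}
    (I : Ideal (MvPolynomial (Fin (n+1)) k)) (hI : IsHomogeneousIdeal I) :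
    ∃ J : Ideal (MvPolynomial (Fin (n+1)) k), I ≤ J ∧ IsHomogeneousIdeal J ∧
      (∀ᶠ m in Filter.atTop, hilbF k J m = hilbF k I m) ∧
      ∀ f, (∀ i, X i * f ∈ J) → f ∈ J := by
  let S : Set (Ideal (MvPolynomial (Fin (n+1)) k)) := {J | I ≤ J ∧ IsHomogeneousIdeal J ∧
      (∀ᶠ m in Filter.atTop, hilbF k J m = hilbF k I m)}
  have hS : S.Nonempty := ⟨I, le_rfl, hI, Filter.Eventually.of_forall fun _ => rfl⟩
  obtain ⟨J, ⟨hIJ, hJ, hev⟩, hmax⟩ := WellFounded.has_min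
    (wellFounded_gt (α := Ideal (MvPolynomial (Fin (n+1)) k))) S hS
  refine ⟨J, hIJ, hJ, hev, fun f hf => ?_⟩
  rw [← sum_homogeneousComponent f]
  refine Ideal.sum_mem _ fun e _ => ?_
  by_contra hne
  set g := homogeneousComponent e f with hg
  have hgh : g.IsHomogeneous e := homogeneousComponent_isHomogeneous e f
  have hXg : ∀ i, X i * g ∈ J := fun i => by
    rw [hg, ← HB.hc_mul (isHomogeneous_X k i)]
    exact hJ _ (hf i) _
  have hmul : ∀ r : MvPolynomial (Fin (n+1)) k, ∃ c : k, r * g - C c * g ∈ J := by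
    intro r
    induction r using MvPolynomial.induction_on with
    | C a => exact ⟨a, by simp⟩
    | add p q hp hq =>
      obtain ⟨c, hc⟩ := hp
      obtain ⟨c', hc'⟩ := hq
      refine ⟨c + c', ?_⟩
      have := J.add_mem hc hc'
      rw [map_add]
      convert this using 1
      ring
    | mul_X p i _ =>
      refine ⟨0, ?_⟩
      rw [map_zero, zero_mul, sub_zero, mul_assoc]
      exact J.mul_mem_left _ (hXg i)
  refine hmax (J ⊔ Ideal.span {g}) ⟨hIJ.trans le_sup_left, HB.hom_sup hJ (HB.hom_span _ ?_), ?_⟩ ?_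
  · rintro x rfl
    exact ⟨e, hgh⟩
  · filter_upwards [hev, Filter.eventually_gt_atTop e] with m hm hme
    rw [← hm]
    refine HB.eq_of le_sup_left m fun s hs h => ?_
    obtain ⟨a, ha, b, hb, rfl⟩ := Submodule.mem_sup.1 h
    obtain ⟨r, rfl⟩ := Ideal.mem_span_singleton'.1 hb
    obtain ⟨c, hc⟩ := hmul r
    have h2 := homogeneousComponent_eq_self hs
    have h3 : homogeneousComponent m (C c * g) = 0 := by
      rw [homogeneousComponent_C_mul, homogeneousComponent_of_mem hgh, if_neg (by omega), mul_zero]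
    have h4 : a + r * g = (a + (r * g - C c * g)) + C c * g := by ring
    rw [h4, map_add, h3, add_zero, ← h4] at h2
    rw [← h2]
    exact hJ _ (J.add_mem ha hc) m
  · refine lt_of_le_of_ne le_sup_left fun h => hne ?_
    rw [h]
    exact Ideal.mem_sup_right (Ideal.mem_span_singleton_self g)

theorem HB.exists_reg {k : Type*} [Field k] [Infinite k] {n : ℕ}
    (J : Ideal (MvPolynomial (Fin (n+1)) k))
    (hJ : ∀ f, (∀ i, X i * f ∈ J) → f ∈ J) :
    ∃ l : MvPolynomial (Fin (n+1)) k, l.IsHomogeneous 1 ∧ ∀ f, l * f ∈ J → f ∈ J := by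
  classical
  let R := MvPolynomial (Fin (n+1)) k
  let V := homogeneousSubmodule (Fin (n+1)) k 1
  have hfin := associatedPrimes.finite R (R ⧸ J)
  let t : Ideal R → Submodule k V := fun P => (P.restrictScalars k).comap V.subtype
  let s : Finset (Submodule k V) := hfin.toFinset.image t
  have htop : ⊤ ∉ s := by
    intro h
    obtain ⟨P, hP, hPt⟩ := Finset.mem_image.1 h
    rw [Set.Finite.mem_toFinset, AssociatedPrimes.mem_iff, isAssociatedPrime_iff] at hP
    obtain ⟨hprime, x, hx⟩ := hP
    obtain ⟨f, rfl⟩ := Ideal.Quotient.mk_surjective x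
    have hX : ∀ i, (X i : R) ∈ P := fun i => by
      have : (⟨X i, isHomogeneous_X k i⟩ : V) ∈ t P := by rw [hPt]; trivial
      exact this
    have hfJ : f ∈ J := by
      refine hJ f fun i => ?_
      have := hX i
      rw [hx, Submodule.mem_colon_singleton, Submodule.mem_bot] at this
      exact Ideal.Quotient.eq_zero_iff_mem.1 this
    apply hprime.ne_top
    rw [hx, Ideal.eq_top_iff_one, Submodule.mem_colon_singleton,
      Ideal.Quotient.eq_zero_iff_mem.2 hfJ]
    simp
  have := Subspace.biUnion_ne_univ_of_top_notMem htop
  obtain ⟨⟨l, hl⟩, hlV⟩ := (Set.ne_univ_iff_exists_notMem _).1 this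
  refine ⟨l, hl, fun f hf => ?_⟩
  by_contra hfJ
  apply hlV
  have hz : l ∈ ⋃ p ∈ associatedPrimes R (R ⧸ J), (p : Set R) := by
    rw [biUnion_associatedPrimes_eq_zero_divisors]
    exact ⟨Ideal.Quotient.mk J f, fun h => hfJ (Ideal.Quotient.eq_zero_iff_mem.1 h),
      Ideal.Quotient.eq_zero_iff_mem.2 hf⟩
  simp only [Set.mem_iUnion] at hz ⊢
  obtain ⟨P, hP, hlP⟩ := hz
  exact ⟨t P, Finset.mem_image.2 ⟨P, hfin.mem_toFinset.2 hP, rfl⟩, hlP⟩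

/-- the lower bound -/
def HB.F (D : ℕ) : ℕ → ℕ → ℕ
  | 0, m => min (m+1) D
  | d+1, m => ∑ i ∈ Finset.range (m+1), HB.F D d i

theorem HB.core {k : Type*} [Field k] [Infinite k] {n : ℕ} (D d : ℕ) :
    ∀ I : Ideal (MvPolynomial (Fin (n+1)) k), IsHomogeneousIdeal I →
      (∀ᶠ m : ℕ in Filter.atTop, (fwdDiff 1)^[d] (fun m : ℕ => (hilbF k I m : ℤ)) m = D) →
      ∀ m, HB.F D d m ≤ hilbF k I m := by
  induction d with
  | zero =>
    intro I hI hev m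
    obtain ⟨J, hIJ, hJ, hJev, hsat⟩ := HB.exists_sat I hI
    obtain ⟨l, hl, hreg⟩ := HB.exists_reg J hsat
    refine le_trans ?_ (HB.mono hIJ m)
    have hex := HB.exact hJ hl hreg
    have hex0 := HB.exact_zero hJ hl
    set g := hilbF k (J ⊔ Ideal.span {l}) with hg
    have hstep : ∀ i, g i = 0 → g (i+1) = 0 := fun i h => HB.zero_succ h
    by_cases h : g m = 0
    · have h1 : ∀ j, g (m + j) = 0 := by
        intro j
        induction j with
        | zero => exact h
        | succ j ih => exact hstep _ ih
      have h2 : ∀ j, hilbF k J (m + j) = hilbF k J m := by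
        intro j
        induction j with
        | zero => rfl
        | succ j ih =>
          rw [← add_assoc, hex, ih]
          have := h1 (j+1)
          rw [← add_assoc] at this
          omega
      obtain ⟨N, hN1, hN2, hN3⟩ :=
        (hev.and (hJev.and (Filter.eventually_ge_atTop m))).exists
      obtain ⟨j, rfl⟩ := Nat.exists_eq_add_of_le hN3
      simp only [Function.iterate_zero, id] at hN1
      have := h2 j
      have h3 : hilbF k I (m+j) = D := by exact_mod_cast hN1
      simp only [HB.F]
      omega
    · have h1 : ∀ i ≤ m, g i ≠ 0 := by
        intro i hi h0
        apply h
        obtain ⟨j, rfl⟩ := Nat.exists_eq_add_of_le hi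
        clear h hi
        induction j with
        | zero => exact h0
        | succ j ih => exact hstep _ ih
      have h2 : ∀ i ≤ m, i + 1 ≤ hilbF k J i := by
        intro i
        induction i with
        | zero => intro _; have := h1 0 (by omega); omega
        | succ i ih =>
          intro hi
          have := h1 (i+1) hi
          have := ih (by omega)
          rw [hex]
          omega
      have := h2 m le_rfl
      simp only [HB.F]
      omega
  | succ d ih =>
    intro I hI hev m
    obtain ⟨J, hIJ, hJ, hJev, hsat⟩ := HB.exists_sat I hI
    obtain ⟨l, hl, hreg⟩ := HB.exists_reg J hsat
    refine le_trans ?_ (HB.mono hIJ m)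
    have hex := HB.exact hJ hl hreg
    have hex0 := HB.exact_zero hJ hl
    have hhom : IsHomogeneousIdeal (J ⊔ Ideal.span {l}) := by
      refine HB.hom_sup hJ (HB.hom_span _ ?_)
      rintro x rfl
      exact ⟨1, hl⟩
    have hsum : hilbF k J m = ∑ i ∈ Finset.range (m+1), hilbF k (J ⊔ Ideal.span {l}) i := by
      induction m with
      | zero => simp [hex0]
      | succ m ih => rw [hex, Finset.sum_range_succ, ih, add_comm]
    rw [hsum]
    refine Finset.sum_le_sum fun i _ => ih _ hhom ?_ i
    obtain ⟨N, hN⟩ := Filter.eventually_atTop.1 (hev.and hJev)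
    filter_upwards [Filter.eventually_ge_atTop (N+1)] with j hj
    obtain ⟨j, rfl⟩ : ∃ i, j = i + 1 := ⟨j - 1, by omega⟩
    rw [← (hN j (by omega)).1, Function.iterate_succ_apply, ← fwdDiff_iter_comp_add,
      fwdDiff_iter_eq_sum_shift, fwdDiff_iter_eq_sum_shift]
    refine Finset.sum_congr rfl fun i _ => ?_
    congr 1
    simp only [fwdDiff]
    rw [← (hN (j + i • 1) (le_trans (by omega) (Nat.le_add_right _ _))).2,
      ← (hN (j + i • 1 + 1) (by simp; omega)).2, hex]
    push_cast
    ring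

theorem HB.choose_step (d : ℕ) (a : ℤ) :
    ichoose (a + (d+1:ℕ) + 1) (d + 1 + 1) = ichoose (a - 1 + (d+1:ℕ) + 1) (d + 1 + 1)
      + ichoose (a + d + 1) (d + 1) := by
  unfold ichoose
  have e : a - 1 + (d+1:ℕ) + 1 = a + d + 1 := by push_cast; ring
  rw [e]
  by_cases h : a + d + 1 < 0
  · simp only [h, if_true]
    by_cases h' : a + (d+1:ℕ) + 1 < 0
    · rw [if_pos h']; rfl
    · have : (a + (d+1:ℕ) + 1).toNat = 0 := by omega
      rw [if_neg h', this]; simp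
  · rw [if_neg h, if_neg (by omega), if_neg h]
    have : (a + (d+1:ℕ) + 1).toNat = (a + d + 1).toNat + 1 := by omega
    rw [this, Nat.choose_succ_succ]
    push_cast
    ring

theorem HB.choose_neg (d : ℕ) (a : ℤ) (h : a < 0) : ichoose (a + d + 1) (d + 1) = 0 := by
  unfold ichoose
  split_ifs with h1
  · rfl
  · rw [Nat.choose_eq_zero_of_lt (by omega)]; rfl

theorem HB.F_eq (D d m : ℕ) : (HB.F D d m : ℤ) =
    ichoose ((m : ℤ) + d + 1) (d + 1) - ichoose ((m : ℤ) - D + d + 1) (d + 1) := by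
  induction d generalizing m with
  | zero =>
    simp only [HB.F, ichoose, Nat.choose_one_right, zero_add]
    split_ifs <;> push_cast <;> omega
  | succ d ih =>
    induction m with
    | zero =>
      have h1 := HB.choose_step d ((0:ℕ):ℤ)
      have h2 := HB.choose_step d (((0:ℕ):ℤ) - D)
      rw [HB.choose_neg (d+1) (((0:ℕ):ℤ) - 1) (by simp)] at h1
      rw [HB.choose_neg (d+1) (((0:ℕ):ℤ) - D - 1) (by simp; omega)] at h2
      rw [h1, h2]
      have := ih 0
      simp only [HB.F, zero_add, Finset.sum_range_one]
      rw [this]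
    | succ m ihm =>
      have h1 := HB.choose_step d ((m+1:ℕ):ℤ)
      have h2 := HB.choose_step d (((m+1:ℕ):ℤ) - D)
      have e1 : ((m+1:ℕ):ℤ) - 1 = m := by push_cast; ring
      have e2 : ((m+1:ℕ):ℤ) - D - 1 = m - D := by push_cast; ring
      rw [e1] at h1
      rw [e2] at h2
      rw [h1, h2]
      have h3 := ih (m+1)
      have h4 : HB.F D (d+1) (m+1) = HB.F D (d+1) m + HB.F D d (m+1) := by
        simp only [HB.F, Finset.sum_range_succ _ (m+1)]
      rw [h4, Nat.cast_add, h3, ihm]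
      ring

theorem HB.mk_smul {k : Type*} [Field k] {n : ℕ} (I : Ideal (MvPolynomial (Fin (n+1)) k))
    (c : k) (f : MvPolynomial (Fin (n+1)) k) :
    Ideal.Quotient.mk I (C c * f) = c • Ideal.Quotient.mk I f := by
  rw [← smul_eq_C_mul]
  exact map_smul (Ideal.Quotient.mkₐ k I) c f

theorem HB.base_hom {k : Type*} (K : Type*) [Field k] [Field K] [Algebra k K] {n : ℕ}
    (I : Ideal (MvPolynomial (Fin (n+1)) k)) (hI : IsHomogeneousIdeal I) :
    IsHomogeneousIdeal (I.map (MvPolynomial.map (algebraMap k K))) := by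
  have : I = Ideal.span {f | f ∈ I ∧ ∃ i, f.IsHomogeneous i} := by
    apply le_antisymm
    · intro f hf
      rw [← sum_homogeneousComponent f]
      exact Ideal.sum_mem _ fun e _ => Ideal.subset_span
        ⟨hI f hf e, e, homogeneousComponent_isHomogeneous e f⟩
    · exact Ideal.span_le.2 fun f hf => hf.1
  rw [this, Ideal.map_span]
  apply HB.hom_span
  rintro _ ⟨f, ⟨_, i, hi⟩, rfl⟩
  exact ⟨i, hi.map _⟩

theorem HB.base_functional {k : Type*} (K : Type*) [Field k] [Field K] [Algebra k K] {n : ℕ}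
    (I : Ideal (MvPolynomial (Fin (n+1)) k)) (φ : MvPolynomial (Fin (n+1)) k →ₗ[k] k)
    (hφ : ∀ f ∈ I, φ f = 0) : ∃ ψ : MvPolynomial (Fin (n+1)) K →ₗ[K] K,
      (∀ f, ψ (MvPolynomial.map (algebraMap k K) f) = algebraMap k K (φ f)) ∧
      ∀ g ∈ I.map (MvPolynomial.map (algebraMap k K)), ψ g = 0 := by
  let ψ : MvPolynomial (Fin (n+1)) K →ₗ[K] K :=
    (basisMonomials (Fin (n+1)) K).constr K (fun s => algebraMap k K (φ (monomial s 1)))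
  have hmon : ∀ s (a : K), ψ (monomial s a) = a * algebraMap k K (φ (monomial s 1)) := by
    intro s a
    have h1 : (monomial s a : MvPolynomial (Fin (n+1)) K) =
        a • (basisMonomials (Fin (n+1)) K) s := by
      rw [coe_basisMonomials, smul_monomial, smul_eq_mul, mul_one]
    rw [h1, map_smul, Module.Basis.constr_basis, smul_eq_mul]
  have hmap : ∀ f, ψ (MvPolynomial.map (algebraMap k K) f) = algebraMap k K (φ f) := by
    intro f
    induction f using MvPolynomial.induction_on' with
    | monomial s a =>
      have h1 : (monomial s a : MvPolynomial (Fin (n+1)) k) = a • monomial s 1 := by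
        rw [smul_monomial, smul_eq_mul, mul_one]
      rw [map_monomial, hmon, h1, map_smul, smul_eq_mul, map_mul]
    | add p q hp hq => simp only [map_add, hp, hq]
  refine ⟨ψ, hmap, ?_⟩
  have key : ∀ f ∈ I, ∀ p, ψ (p * MvPolynomial.map (algebraMap k K) f) = 0 := by
    intro f hf p
    induction p using MvPolynomial.induction_on' with
    | monomial s a =>
      have h1 : (monomial s a : MvPolynomial (Fin (n+1)) K) * MvPolynomial.map (algebraMap k K) f
          = a • MvPolynomial.map (algebraMap k K) (monomial s 1 * f) := by
        rw [map_mul, map_monomial, map_one, ← smul_mul_assoc, smul_monomial, smul_eq_mul, mul_one]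
      rw [h1, map_smul, hmap, hφ _ (I.mul_mem_left _ hf), map_zero, smul_zero]
    | add p q hp hq => rw [add_mul, map_add, hp, hq, add_zero]
  have key2 : ∀ g ∈ I.map (MvPolynomial.map (algebraMap k K)), ∀ p, ψ (p * g) = 0 := by
    intro g hg
    refine Submodule.span_induction (p := fun g _ => ∀ p, ψ (p * g) = 0) ?_ ?_ ?_ ?_ hg
    · rintro _ ⟨f, hf, rfl⟩ p
      exact key f hf p
    · intro p; simp
    · intro x y _ _ hx hy p
      rw [mul_add, map_add, hx, hy, add_zero]
    · intro a x _ hx p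
      rw [smul_eq_mul, ← mul_assoc]
      exact hx _
  intro g hg
  simpa using key2 g hg 1

theorem HB.base_eq {k : Type*} (K : Type*) [Field k] [Field K] [Algebra k K] {n : ℕ}
    (I : Ideal (MvPolynomial (Fin (n+1)) k)) (m : ℕ) :
    hilbF K (I.map (MvPolynomial.map (algebraMap k K))) m = hilbF k I m := by
  set IK := I.map (MvPolynomial.map (algebraMap k K)) with hIK
  change Module.finrank K (HB.Q K IK m) = Module.finrank k (HB.Q k I m)
  let b := Module.finBasis k (HB.Q k I m)
  have hs : ∀ i, ∃ s : MvPolynomial (Fin (n+1)) k, s.IsHomogeneous m ∧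
      Ideal.Quotient.mk I s = b i := fun i => HB.mem_Q.1 (b i).2
  choose s hsm hsb using hs
  let v : Fin (Module.finrank k (HB.Q k I m)) → (MvPolynomial (Fin (n+1)) K ⧸ IK) :=
    fun i => Ideal.Quotient.mk IK (MvPolynomial.map (algebraMap k K) (s i))
  have hli : LinearIndependent K v := by
    rw [Fintype.linearIndependent_iff]
    intro c hc i
    obtain ⟨g, hg⟩ := LinearMap.exists_extend (b.coord i)
    obtain ⟨ψ, hψ, hψ0⟩ := HB.base_functional K I
      (g ∘ₗ (Ideal.Quotient.mkₐ k I).toLinearMap) (by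
        intro f hf
        have : Ideal.Quotient.mk I f = 0 := Ideal.Quotient.eq_zero_iff_mem.2 hf
        simp [this])
    have hgs : ∀ j, g (Ideal.Quotient.mk I (s j)) = if j = i then 1 else 0 := by
      intro j
      rw [hsb]
      have := LinearMap.congr_fun hg (b j)
      rw [LinearMap.comp_apply, Submodule.subtype_apply] at this
      rw [this, Module.Basis.coord_apply, Module.Basis.repr_self, Finsupp.single_apply]
    have hmem : ∑ j, C (c j) * MvPolynomial.map (algebraMap k K) (s j) ∈ IK := by
      rw [← Ideal.Quotient.eq_zero_iff_mem, ← hc, map_sum]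
      refine Finset.sum_congr rfl fun j _ => ?_
      exact HB.mk_smul _ _ _
    have h0 := hψ0 _ hmem
    simp only [← smul_eq_C_mul, map_sum, map_smul, hψ, LinearMap.comp_apply] at h0
    have h1 : ∀ j, g ((Ideal.Quotient.mkₐ k I).toLinearMap (s j)) = if j = i then 1 else 0 := hgs
    simp only [h1] at h0
    simpa using h0
  have hspan : HB.Q K IK m = Submodule.span K (Set.range v) := by
    apply le_antisymm
    · intro q hq
      obtain ⟨f, hf, rfl⟩ := HB.mem_Q.1 hq
      have hmono : ∀ f : MvPolynomial (Fin (n+1)) k, f.IsHomogeneous m →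
          Ideal.Quotient.mk IK (MvPolynomial.map (algebraMap k K) f) ∈
            Submodule.span K (Set.range v) := by
        intro f hf
        have hfQ : Ideal.Quotient.mk I f ∈ HB.Q k I m := HB.mem_Q.2 ⟨f, hf, rfl⟩
        have hrep := congrArg Subtype.val (b.sum_repr ⟨_, hfQ⟩)
        set c := b.repr ⟨_, hfQ⟩ with hc
        have h1 : f - ∑ i, C (c i) * s i ∈ I := by
          rw [← Ideal.Quotient.eq_zero_iff_mem, map_sub, sub_eq_zero]
          refine hrep.symm.trans ?_
          rw [map_sum, Submodule.coe_sum]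
          refine Finset.sum_congr rfl fun j _ => ?_
          rw [Submodule.coe_smul, ← hsb]
          exact (HB.mk_smul _ _ _).symm
        have h2 := Ideal.mem_map_of_mem (MvPolynomial.map (algebraMap k K)) h1
        rw [← hIK, map_sub, ← Ideal.Quotient.eq_zero_iff_mem, map_sub, sub_eq_zero] at h2
        rw [h2, map_sum, map_sum]
        refine Submodule.sum_mem _ fun j _ => ?_
        have h3 : Ideal.Quotient.mk IK (MvPolynomial.map (algebraMap k K) (C (c j) * s j)) =
            algebraMap k K (c j) • v j := by
          rw [map_mul, map_C]
          exact HB.mk_smul _ _ _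
        rw [h3]
        exact Submodule.smul_mem _ _ (Submodule.subset_span ⟨j, rfl⟩)
      rw [f.as_sum, map_sum]
      refine Submodule.sum_mem _ fun e he => ?_
      have h4 : Ideal.Quotient.mk IK (monomial e (coeff e f)) = (coeff e f) •
          Ideal.Quotient.mk IK (MvPolynomial.map (algebraMap k K) (monomial e 1)) := by
        rw [map_monomial, map_one]
        have : (monomial e (coeff e f) : MvPolynomial (Fin (n+1)) K) =
          C (coeff e f) * monomial e 1 := by rw [C_mul_monomial, mul_one]
        rw [this]
        exact HB.mk_smul _ _ _
      rw [h4]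
      refine Submodule.smul_mem _ _ (hmono _ (isHomogeneous_monomial _ ?_))
      have := hf.degree_eq_sum_deg_support he
      rw [this]; rfl
    · rw [Submodule.span_le]
      rintro _ ⟨i, rfl⟩
      exact HB.mem_Q.2 ⟨_, (hsm i).map _, rfl⟩
  rw [hspan, finrank_span_eq_card hli, Fintype.card_fin]

/-- lower bound for the Hilbert function of an arbitrary homogeneous
ideal of projective dimension `d ≥ 0`. -/
theorem hilbert_function_lower_bound {k : Type*} [Field k] {n d : ℕ}
    (I : Ideal (MvPolynomial (Fin (n+1)) k))
    (hhom : IsHomogeneousIdeal I) (hne : hilbP k I ≠ 0) (hdim : idealDim k I = d) :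
    ∀ m : ℕ, 1 ≤ m →
      ichoose ((m : ℤ) + d + 1) (d + 1)
          - ichoose ((m : ℤ) - idealDeg k I + d + 1) (d + 1)
        ≤ (hilbF k I m : ℤ) := by 
  intro m _
  rw [← HB.F_eq]
  have hex : ∃ P : Polynomial ℚ, ∀ᶠ m : ℕ in Filter.atTop,
      (hilbF k I m : ℚ) = P.eval (m : ℚ) := by
    by_contra h
    exact hne (by rw [hilbP, dif_neg h])
  have hP : ∀ᶠ m : ℕ in Filter.atTop, (hilbF k I m : ℚ) = (hilbP k I).eval (m : ℚ) := by
    rw [hilbP, dif_pos hex]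
    exact hex.choose_spec
  obtain ⟨N, hN⟩ := Filter.eventually_atTop.1 hP
  have hdiff : ∀ j ≥ N, (((fwdDiff 1)^[d] (fun m : ℕ => (hilbF k I m : ℤ)) j : ℤ) : ℚ) =
      (hilbP k I).leadingCoeff * (d.factorial : ℚ) := by
    intro j hj
    have h1 := congrFun (Polynomial.fwdDiff_iter_degree_eq_factorial (hilbP k I)) (j : ℚ)
    have hd : (hilbP k I).natDegree = d := hdim
    rw [hd] at h1
    have h2 : ((hilbP k I).leadingCoeff • (d.factorial : ℚ → ℚ)) (j : ℚ) =
      (hilbP k I).leadingCoeff * (d.factorial : ℚ) := by simp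
    rw [← h2, ← h1, fwdDiff_iter_eq_sum_shift, fwdDiff_iter_eq_sum_shift, Int.cast_sum]
    refine Finset.sum_congr rfl fun i _ => ?_
    have h3 := hN (j + i) (by omega)
    simp only [smul_eq_mul, zsmul_eq_mul, Int.cast_mul, nsmul_eq_mul, mul_one, Int.cast_natCast]
    push_cast at h3 ⊢
    rw [h3]
  have hdeg : idealDeg k I = ⌊(hilbP k I).leadingCoeff * (d.factorial : ℚ)⌋₊ := by
    have hd : (hilbP k I).natDegree = d := hdim
    rw [idealDeg, hd, mul_comm]
  have hfl : ∀ j ≥ N, idealDeg k I =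
      ((fwdDiff 1)^[d] (fun m : ℕ => (hilbF k I m : ℤ)) j).toNat := by
    intro j hj
    rw [hdeg, ← hdiff j hj]
    rw [← Int.floor_toNat, Int.floor_intCast]
  set D := idealDeg k I with hD
  rcases Nat.eq_zero_or_pos D with h0 | hpos
  · have hF : ∀ d m, HB.F 0 d m = 0 := by
      intro d
      induction d with
      | zero => intro m; simp [HB.F]
      | succ d ih => intro m; simp [HB.F, ih]
    rw [h0, hF]
    positivity
  · have hc := HB.core (k := AlgebraicClosure k) D d
      (I.map (MvPolynomial.map (algebraMap k (AlgebraicClosure k)))) (HB.base_hom _ I hhom)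
    simp only [HB.base_eq] at hc
    have := hc (by
      filter_upwards [Filter.eventually_ge_atTop N] with j hj
      have := hfl j hj
      omega) m
    exact_mod_cast this
end

section
/- Let I be a homogeneous ideal of projective dimension d in k[x_0,...,x_n] whose Hilbert function satisfies h_I(m) = C(m+d+1, d+1) − C(m − deg I + d+1, d+1) for all m ≥ 1. Then there exist linearly independent linear forms u_1,...,u_{n-d-1} ∈ k[x_0,...,x_n] and a homogeneous polynomial f ∉ (u_1,...,u_{n-d-1}) such that I = (u_1,...,u_{n-d-1}, f). -/
open MvPolynomial

lemma finrank_homog (k : Type*) [Field k] (N m : ℕ) :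
    Module.finrank k (homogeneousSubmodule (Fin (N+1)) k m) = (m + N).choose N := by
  have h1 : homogeneousSubmodule (Fin (N+1)) k m = restrictSupport k {d | d.degree = m} :=
    homogeneousSubmodule_eq_finsupp_supported _ _ _
  rw [h1, Module.finrank_eq_nat_card_basis (basisRestrictSupport k _)]
  have h2 : ({d : Fin (N+1) →₀ ℕ | d.degree = m} : Set _)
      = ((Finset.univ : Finset (Fin (N+1))).finsuppAntidiag m : Set _) := by
    ext d
    simp [Finsupp.degree_eq_sum]
  rw [h2]
  rw [Nat.card_eq_fintype_card]
  simp only [SetLike.coe_sort_coe, Fintype.card_coe]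
  rw [Finset.card_finsuppAntidiag_nat_eq_choose]
  simp only [Finset.card_univ, Fintype.card_fin]
  have : N + 1 + m - 1 = m + N := by omega
  rw [this, Nat.choose_symm_add]

lemma finrank_comap_subtype {k M : Type*} [Field k] [AddCommGroup M] [Module k M]
    (p q : Submodule k M) :
    Module.finrank k (Submodule.comap p.subtype q) = Module.finrank k (p ⊓ q : Submodule k M) := by
  have h := (Submodule.equivMapOfInjective p.subtype p.injective_subtype
    (Submodule.comap p.subtype q)).finrank_eq
  rw [h, Submodule.map_comap_subtype]

instance fd_homog (k : Type*) [Field k] (N m : ℕ) :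
    FiniteDimensional k (homogeneousSubmodule (Fin N) k m) :=
  Module.Finite.iff_fg.mpr (homogeneousSubmodule_fg _ _ _)

lemma hilbF_add {k : Type*} [Field k] {n N : ℕ}
    (I : Ideal (MvPolynomial (Fin (n+1)) k)) (m : ℕ)
    (s : MvPolynomial (Fin N) k →ₐ[k] MvPolynomial (Fin (n+1)) k)
    (hs : ∀ t, t.IsHomogeneous m → (s t).IsHomogeneous m)
    (hs' : ∀ p : MvPolynomial (Fin (n+1)) k, p.IsHomogeneous m →
      ∃ t, t.IsHomogeneous m ∧ p - s t ∈ I) :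
    hilbF k I m + Module.finrank k
      (homogeneousSubmodule (Fin N) k m ⊓ (I.comap s).restrictScalars k : Submodule k _)
      = Module.finrank k (homogeneousSubmodule (Fin N) k m) := by
  set φ : MvPolynomial (Fin N) k →ₗ[k] _ := (Ideal.Quotient.mkₐ k I).toLinearMap ∘ₗ s.toLinearMap
    with hφ
  have h := LinearMap.finrank_range_add_finrank_ker (φ.domRestrict (homogeneousSubmodule (Fin N) k m))
  rw [LinearMap.ker_domRestrict, LinearMap.range_domRestrict] at h
  have hk : LinearMap.ker φ = (I.comap s).restrictScalars k := by
    ext t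
    simp [hφ, Ideal.Quotient.eq_zero_iff_mem]
  have hr : (homogeneousSubmodule (Fin N) k m).map φ = (homogeneousSubmodule (Fin (n+1)) k m).map
    (Ideal.Quotient.mkₐ k I).toLinearMap := by
    apply le_antisymm
    · rintro _ ⟨t, ht, rfl⟩
      exact ⟨s t, hs t ht, rfl⟩
    · rintro _ ⟨p, hp, rfl⟩
      obtain ⟨t, ht, h⟩ := hs' p hp
      exact ⟨t, ht, (Ideal.Quotient.eq.mpr h).symm⟩
  rw [hk, hr, finrank_comap_subtype] at h
  exact h

lemma splitting {k : Type*} [Field k] {n r N : ℕ} (u : Fin r → MvPolynomial (Fin (n+1)) k)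
    (hu : ∀ i, (u i).IsHomogeneous 1) (hli : LinearIndependent k u) (hr : r + N = n + 1) :
    ∃ (π : MvPolynomial (Fin (n+1)) k →ₐ[k] MvPolynomial (Fin N) k)
      (s : MvPolynomial (Fin N) k →ₐ[k] MvPolynomial (Fin (n+1)) k),
      (∀ m p, p.IsHomogeneous m → (π p).IsHomogeneous m) ∧
      (∀ m p, p.IsHomogeneous m → (s p).IsHomogeneous m) ∧
      (∀ t, π (s t) = t) ∧ (∀ i, π (u i) = 0) ∧
      (∀ p, p - s (π p) ∈ Ideal.span (Set.range u)) := by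
  let u' : Fin r → homogeneousSubmodule (Fin (n+1)) k 1 := fun i => ⟨u i, hu i⟩
  have hli' : LinearIndependent k u' :=
    LinearIndependent.of_comp (homogeneousSubmodule (Fin (n+1)) k 1).subtype hli
  set W := Submodule.span k (Set.range u') with hW
  have hWr : Module.finrank k W = r := by
    rw [finrank_span_eq_card hli', Fintype.card_fin]
  have hQ : Module.finrank k (homogeneousSubmodule (Fin (n+1)) k 1 ⧸ W) = N := by
    have := W.finrank_quotient_add_finrank
    rw [finrank_homog, hWr] at this
    have h3 : (1 + n).choose n = n + 1 := by
      rw [add_comm, Nat.choose_succ_self_right]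
    omega
  let e : (homogeneousSubmodule (Fin (n+1)) k 1 ⧸ W) ≃ₗ[k] (Fin N → k) :=
    LinearEquiv.ofFinrankEq _ _ (by simp [hQ])
  let θ : homogeneousSubmodule (Fin (n+1)) k 1 →ₗ[k] (Fin N → k) := e.toLinearMap ∘ₗ W.mkQ
  have hθ : LinearMap.range θ = ⊤ := by
    rw [LinearMap.range_eq_top]
    exact e.surjective.comp W.mkQ_surjective
  have hker : ∀ l, θ l = 0 → l ∈ W := by
    intro l hl
    simpa [θ] using hl
  have hker' : ∀ l ∈ W, θ l = 0 := by
    intro l hl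
    simpa [θ] using hl
  obtain ⟨sec, hsec⟩ := θ.exists_rightInverse_of_surjective hθ
  have hsec' : ∀ v, θ (sec v) = v := fun v => LinearMap.congr_fun hsec v
  let L : (Fin N → k) →ₗ[k] MvPolynomial (Fin N) k := Fintype.linearCombination k X
  have hL : ∀ v, L v = ∑ j, v j • X j := fun v => Fintype.linearCombination_apply ..
  have hLh : ∀ v, (L v).IsHomogeneous 1 := by
    intro v
    rw [hL]
    refine IsHomogeneous.sum _ _ _ fun j _ => ?_
    rw [smul_eq_C_mul]
    exact isHomogeneous_C_mul_X _ _
  let Xh : Fin (n+1) → homogeneousSubmodule (Fin (n+1)) k 1 := fun i => ⟨X i, isHomogeneous_X _ _⟩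
  let π : MvPolynomial (Fin (n+1)) k →ₐ[k] MvPolynomial (Fin N) k :=
    aeval fun i => L (θ (Xh i))
  let s : MvPolynomial (Fin N) k →ₐ[k] MvPolynomial (Fin (n+1)) k :=
    aeval fun j => (sec (Pi.single j 1) : MvPolynomial (Fin (n+1)) k)
  have hspan : Submodule.span k (Set.range Xh) = ⊤ := by
    apply Submodule.map_injective_of_injective
      (homogeneousSubmodule (Fin (n+1)) k 1).injective_subtype
    rw [Submodule.map_span, Submodule.map_top, Submodule.range_subtype, ← Set.range_comp]
    exact homogeneousSubmodule_one_eq_span_X.symm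
  have hπ : π.toLinearMap ∘ₗ (homogeneousSubmodule (Fin (n+1)) k 1).subtype = L ∘ₗ θ := by
    apply LinearMap.ext_on_range hspan
    intro i
    simp [π, Xh]
  have hπ' : ∀ l : homogeneousSubmodule (Fin (n+1)) k 1, π l = L (θ l) :=
    fun l => LinearMap.congr_fun hπ l
  have hsL : ∀ v, s (L v) = sec v := by
    intro v
    rw [hL]
    conv_rhs => rw [pi_eq_sum_univ' v]
    simp [s, map_sum]
  have hLs : ∀ j, L (Pi.single j 1) = X j := by
    intro j
    simp [hL, Pi.single_apply]
  refine ⟨π, s, ?_, ?_, ?_, ?_, ?_⟩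
  · intro m p hp
    have := hp.aeval (n := 1) _ fun i => hLh (θ (Xh i))
    rwa [one_mul] at this
  · intro m p hp
    have := hp.aeval (n := 1) (fun j => (sec (Pi.single j 1) : MvPolynomial (Fin (n+1)) k))
      fun j => (sec (Pi.single j 1)).2
    rwa [one_mul] at this
  · intro t
    have : π.comp s = AlgHom.id k _ := by
      ext1 j
      simp only [AlgHom.comp_apply, s, aeval_X, AlgHom.id_apply]
      rw [hπ', hsec', hLs]
    exact DFunLike.congr_fun this t
  · intro i
    have := hπ' (u' i)
    rw [hker' _ (Submodule.subset_span ⟨i, rfl⟩), map_zero] at this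
    exact this
  · intro p
    have key : (Ideal.Quotient.mkₐ k (Ideal.span (Set.range u))) =
        (Ideal.Quotient.mkₐ k (Ideal.span (Set.range u))).comp (s.comp π) := by
      ext1 i
      simp only [AlgHom.comp_apply]
      have h1 : π (X i) = L (θ (Xh i)) := hπ' (Xh i)
      rw [h1, hsL]
      refine Ideal.Quotient.eq.mpr ?_
      have h2 : Xh i - sec (θ (Xh i)) ∈ W := by
        apply hker
        rw [map_sub, hsec', sub_self]
      have h3 : W.map (homogeneousSubmodule (Fin (n+1)) k 1).subtype ≤
          (Ideal.span (Set.range u)).restrictScalars k := by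
        rw [hW, Submodule.map_span, Submodule.span_le]
        rintro _ ⟨_, ⟨j, rfl⟩, rfl⟩
        exact Ideal.subset_span ⟨j, rfl⟩
      exact h3 ⟨_, h2, rfl⟩
    exact Ideal.Quotient.eq.mp (DFunLike.congr_fun key p)

lemma exists_hilbF_ne_zero {k : Type*} [Field k] {n : ℕ}
    (I : Ideal (MvPolynomial (Fin (n+1)) k)) (hne : hilbP k I ≠ 0) :
    ∃ m, 1 ≤ m ∧ hilbF k I m ≠ 0 := by
  by_contra! hcon
  have hex : ∃ P : Polynomial ℚ, ∀ᶠ m : ℕ in Filter.atTop,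
      (hilbF k I m : ℚ) = P.eval (m : ℚ) := by
    by_contra h
    exact hne (dif_neg h)
  have hP : ∀ᶠ m : ℕ in Filter.atTop, (hilbF k I m : ℚ) = (hilbP k I).eval (m : ℚ) := by
    have : hilbP k I = hex.choose := dif_pos hex
    rw [this]
    exact hex.choose_spec
  obtain ⟨M, hM⟩ := Filter.eventually_atTop.mp hP
  apply hne
  apply Polynomial.eq_zero_of_infinite_isRoot
  apply Set.Infinite.mono (s := (fun m : ℕ => (m : ℚ)) '' Set.Ici (M + 1))
  · rintro _ ⟨m, hm, rfl⟩
    have hm' : M + 1 ≤ m := hm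
    have h := hM m (by omega)
    rw [hcon m (by omega)] at h
    simpa using h.symm
  · exact (Set.Ici_infinite _).image (Nat.cast_injective.injOn)

lemma ichoose_of_le (m D c : ℕ) (h : D ≤ m) :
    ichoose ((m : ℤ) - D + c + 1) (c + 1) = ((m - D + (c + 1)).choose (c + 1) : ℕ) := by
  have : (m : ℤ) - D + c + 1 = ((m - D + (c + 1) : ℕ) : ℤ) := by
    push_cast [h]
    ring
  rw [this, ichoose, if_neg (by omega), Int.toNat_natCast]

lemma ichoose_of_lt (m D c : ℕ) (h : m < D) :
    ichoose ((m : ℤ) - D + c + 1) (c + 1) = 0 := by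
  rw [ichoose]
  split_ifs with h0
  · rfl
  · rw [Nat.choose_eq_zero_of_lt (by omega)]
    rfl

lemma ichoose_nonneg (a : ℤ) (b : ℕ) : 0 ≤ ichoose a b := by
  rw [ichoose]
  split_ifs <;> simp

/-- characterization of the ideals attaining the lower bound for the
Hilbert function: they are generated by `n − d − 1` linearly independent linear
forms together with one further homogeneous polynomial. -/
theorem hilbert_function_extremal_characterization {k : Type*} [Field k] {n d : ℕ}
    (hd : d + 1 ≤ n) (I : Ideal (MvPolynomial (Fin (n+1)) k))
    (hhom : IsHomogeneousIdeal I) (hne : hilbP k I ≠ 0) (hdim : idealDim k I = d)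
    (heq : ∀ m : ℕ, 1 ≤ m →
      (hilbF k I m : ℤ) = ichoose ((m : ℤ) + d + 1) (d + 1)
        - ichoose ((m : ℤ) - idealDeg k I + d + 1) (d + 1)) :
    ∃ u : Fin (n - (d + 1)) → MvPolynomial (Fin (n+1)) k,
      (∀ i, (u i).IsHomogeneous 1) ∧ LinearIndependent k u ∧
      ∃ f, f ∉ Ideal.span (Set.range u) ∧ (∃ e, f.IsHomogeneous e) ∧
        I = Ideal.span (insert f (Set.range u)) := by 
  set D := idealDeg k I with hDdef
  obtain ⟨m₀, hm₀, hm₀'⟩ := exists_hilbF_ne_zero I hne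
  have hI : I ≠ ⊤ := by
    rintro rfl
    apply hm₀'
    rw [hilbF]
    have : Subsingleton (MvPolynomial (Fin (n+1)) k ⧸ (⊤ : Ideal (MvPolynomial (Fin (n+1)) k))) :=
      Ideal.Quotient.subsingleton_iff.mpr rfl
    exact Module.finrank_zero_of_subsingleton
  have hdim1 : ∀ m : ℕ, ichoose ((m : ℤ) + d + 1) (d + 1) = ((m + (d + 1)).choose (d + 1) : ℕ) := by
    intro m
    simpa using ichoose_of_le m 0 d (Nat.zero_le _)
  have hD : 1 ≤ D := by
    by_contra h
    have h0 : D = 0 := by omega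
    have := heq m₀ hm₀
    rw [h0] at this
    simp at this
    exact hm₀' this
  have h1 : n - (d + 1) ≤ Module.finrank k (homogeneousSubmodule (Fin (n+1)) k 1 ⊓
      (I.comap (AlgHom.id k (MvPolynomial (Fin (n+1)) k))).restrictScalars k : Submodule k _) := by
    have ha := hilbF_add I 1 (AlgHom.id k _) (fun t ht => ht)
      (fun p hp => ⟨p, hp, by simp⟩)
    have hb := heq 1 le_rfl
    rw [hdim1] at hb
    have hc := ichoose_nonneg (((1 : ℕ) : ℤ) - D + d + 1) (d + 1)
    rw [finrank_homog] at ha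
    have hc1 : (1 + n).choose n = n + 1 := by
      rw [add_comm, Nat.choose_succ_self_right]
    have hc2 : (1 + (d + 1)).choose (d + 1) = d + 2 := by
      rw [add_comm, Nat.choose_succ_self_right]
    rw [hc1] at ha
    rw [hc2] at hb
    omega
  obtain ⟨w, hw⟩ := exists_linearIndependent_of_le_finrank h1
  let u : Fin (n - (d + 1)) → MvPolynomial (Fin (n+1)) k := fun i => w i
  have hu1 : ∀ i, (u i).IsHomogeneous 1 := fun i => (w i).2.1
  have huI : ∀ i, u i ∈ I := fun i => (w i).2.2
  have huli : LinearIndependent k u := hw.map' (Submodule.subtype _) (Submodule.ker_subtype _)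
  obtain ⟨π, s, hπh, hsh, hπs, hπu, hsπ⟩ := splitting (N := d + 2) u hu1 huli (by omega)
  have hUI : Ideal.span (Set.range u) ≤ I := by
    rw [Ideal.span_le]
    rintro _ ⟨i, rfl⟩
    exact huI i
  have hUker : ∀ p ∈ Ideal.span (Set.range u), π p = 0 := by
    have : Ideal.span (Set.range u) ≤ RingHom.ker π := by
      rw [Ideal.span_le]
      rintro _ ⟨i, rfl⟩
      exact hπu i
    exact fun p hp => this hp
  have hJ : ∀ m, 1 ≤ m → (Module.finrank k (homogeneousSubmodule (Fin (d+2)) k m ⊓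
      (I.comap s).restrictScalars k : Submodule k _) : ℤ) =
        ichoose ((m : ℤ) - D + d + 1) (d + 1) := by
    intro m hm
    have ha := hilbF_add I m s (hsh m)
      (fun p hp => ⟨π p, hπh m p hp, hUI (hsπ p)⟩)
    have hb := heq m hm
    rw [hdim1] at hb
    rw [finrank_homog] at ha
    omega
  have hJD : Module.finrank k (homogeneousSubmodule (Fin (d+2)) k D ⊓
      (I.comap s).restrictScalars k : Submodule k _) = 1 := by
    have := hJ D hD
    rw [ichoose_of_le D D d le_rfl] at this
    simpa using this
  obtain ⟨g, hg0⟩ : ∃ g : (homogeneousSubmodule (Fin (d+2)) k D ⊓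
      (I.comap s).restrictScalars k : Submodule k _), g ≠ 0 := by
    have : Nontrivial (homogeneousSubmodule (Fin (d+2)) k D ⊓
      (I.comap s).restrictScalars k : Submodule k _) :=
      Module.nontrivial_of_finrank_pos (R := k) (by omega)
    exact exists_ne 0
  obtain ⟨g, hgD, hgI⟩ := g
  have hg0 : g ≠ 0 := fun h => hg0 (Subtype.ext h)
  have hgI : s g ∈ I := hgI
  have hgD : g.IsHomogeneous D := hgD
  have hmem : ∀ m, 1 ≤ m → ∀ q : MvPolynomial (Fin (d+2)) k, q.IsHomogeneous m → s q ∈ I →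
      g ∣ q := by
    intro m hm q hq hqI
    have hJm := hJ m hm
    rcases lt_or_ge m D with hlt | hge
    · rw [ichoose_of_lt m D d hlt] at hJm
      have hfin : FiniteDimensional k (homogeneousSubmodule (Fin (d+2)) k m ⊓
        (I.comap s).restrictScalars k : Submodule k _) := Submodule.finiteDimensional_inf_left _ _
      have hbot := Submodule.finrank_eq_zero.mp (Nat.cast_eq_zero.mp hJm)
      have : q ∈ (homogeneousSubmodule (Fin (d+2)) k m ⊓
        (I.comap s).restrictScalars k : Submodule k _) := ⟨hq, hqI⟩
      rw [hbot] at this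
      rw [(Submodule.mem_bot k).mp this]
      exact dvd_zero _
    · rw [ichoose_of_le m D d hge, ← finrank_homog k] at hJm
      have hinj : Function.Injective (LinearMap.mulLeft k g) := fun a b hab =>
        mul_left_cancel₀ hg0 hab
      have hle : (homogeneousSubmodule (Fin (d+2)) k (m - D)).map (LinearMap.mulLeft k g) ≤
          (homogeneousSubmodule (Fin (d+2)) k m ⊓
            (I.comap s).restrictScalars k : Submodule k _) := by
        rintro _ ⟨t, ht, rfl⟩
        refine ⟨?_, ?_⟩
        · have := hgD.mul ht
          rwa [Nat.add_sub_cancel' hge] at this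
        · change s (g * t) ∈ I
          rw [map_mul]
          exact I.mul_mem_right _ hgI
      have hfr : Module.finrank k
          ((homogeneousSubmodule (Fin (d+2)) k (m - D)).map (LinearMap.mulLeft k g)) =
          Module.finrank k (homogeneousSubmodule (Fin (d+2)) k m ⊓
            (I.comap s).restrictScalars k : Submodule k _) := by
        rw [← (Submodule.equivMapOfInjective _ hinj _).finrank_eq]
        exact (Nat.cast_injective hJm).symm
      have hfin : FiniteDimensional k (homogeneousSubmodule (Fin (d+2)) k m ⊓
        (I.comap s).restrictScalars k : Submodule k _) := Submodule.finiteDimensional_inf_left _ _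
      have heqm := Submodule.eq_of_le_of_finrank_eq hle hfr
      have : q ∈ (homogeneousSubmodule (Fin (d+2)) k m ⊓
        (I.comap s).restrictScalars k : Submodule k _) := ⟨hq, hqI⟩
      rw [← heqm] at this
      obtain ⟨t, _, rfl⟩ := this
      exact ⟨t, rfl⟩
  refine ⟨u, hu1, huli, s g, ?_, ⟨D, hsh D g hgD⟩, ?_⟩
  · intro h
    have := hUker _ h
    rw [hπs] at this
    exact hg0 this
  · apply le_antisymm
    · intro p hp
      rw [← sum_homogeneousComponent p]
      refine Ideal.sum_mem _ fun m _ => ?_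
      have hpm := hhom p hp m
      have hph := homogeneousComponent_isHomogeneous m p
      generalize homogeneousComponent m p = q at hpm hph
      have hle : Ideal.span (Set.range u) ≤ Ideal.span (insert (s g) (Set.range u)) :=
        Ideal.span_mono (Set.subset_insert _ _)
      rcases Nat.eq_zero_or_pos m with rfl | hm
      · have hqC : q = C (coeff 0 q) := by
          rw [← homogeneousComponent_zero, homogeneousComponent_eq_self hph]
        have : q = 0 := by
          by_contra hq0
          apply hI
          refine Ideal.eq_top_of_isUnit_mem I hpm ?_
          rw [hqC]
          refine IsUnit.map C (IsUnit.mk0 _ fun h => hq0 ?_)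
          rw [hqC, h, map_zero]
        rw [this]
        exact Ideal.zero_mem _
      · have hsq : s (π q) ∈ I := by
          have := I.sub_mem hpm (hUI (hsπ q))
          rwa [sub_sub_cancel] at this
        obtain ⟨t, ht⟩ := hmem m hm (π q) (hπh m q hph) hsq
        have h2 : q = (q - s (π q)) + s g * s t := by
          rw [← map_mul, ← ht, sub_add_cancel]
        rw [h2]
        exact Ideal.add_mem _ (hle (hsπ q))
          (Ideal.mul_mem_right _ _ (Ideal.subset_span (Set.mem_insert _ _)))
    · rw [Ideal.span_le]
      rintro x (rfl | ⟨i, rfl⟩)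
      · exact hgI
      · exact huI i
end

section
/- Let V ⊆ P^n be an irreducible projective variety of dimension d ≥ 0 over an algebraically closed field. Then for all m ≥ 1, the Hilbert function of V satisfies h_V(m) ≤ deg V · m^d + d. -/
open MvPolynomial

open Classical in
/-- Iterated sumset `S + ⋯ + S` (`j` summands). -/
noncomputable def sset {V : Type*} [AddCommMonoid V] (S : Finset V) : ℕ → Finset V
  | 0 => {0}
  | j + 1 => (S ×ˢ sset S j).image (fun p => p.1 + p.2)

section SSet
variable {V : Type*} [AddCommMonoid V]

theorem mem_sset_succ {S : Finset V} {j : ℕ} {w : V} :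
    w ∈ sset S (j + 1) ↔ ∃ s ∈ S, ∃ t ∈ sset S j, s + t = w := by
  simp [sset, and_assoc]

theorem sset_mono {S T : Finset V} (h : S ⊆ T) (j : ℕ) : sset S j ⊆ sset T j := by
  induction j with
  | zero => simp [sset]
  | succ j ih =>
    intro w hw
    obtain ⟨s, hs, t, ht, rfl⟩ := mem_sset_succ.1 hw
    exact mem_sset_succ.2 ⟨s, h hs, t, ih ht, rfl⟩

theorem sset_add {S : Finset V} {i j : ℕ} {a b : V} (ha : a ∈ sset S i) (hb : b ∈ sset S j) :
    a + b ∈ sset S (i + j) := by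
  induction i generalizing a with
  | zero =>
    simp only [sset, Finset.mem_singleton] at ha
    subst ha
    simpa using hb
  | succ i ih =>
    obtain ⟨s, hs, t, ht, rfl⟩ := mem_sset_succ.1 ha
    rw [show i + 1 + j = (i + j) + 1 by ring]
    exact mem_sset_succ.2 ⟨s, hs, t + b, ih ht, by rw [add_assoc]⟩

theorem sset_nsmul {S : Finset V} {s : V} (hs : s ∈ S) (j : ℕ) : j • s ∈ sset S j := by
  induction j with
  | zero => simp [sset]
  | succ j ih => exact mem_sset_succ.2 ⟨s, hs, _, ih, by rw [succ_nsmul']⟩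

theorem sset_sum {S b : Finset V} (hb : b ⊆ S) (f : V → ℕ) :
    ∑ s ∈ b, f s • s ∈ sset S (∑ s ∈ b, f s) := by
  classical
  induction b using Finset.induction_on with
  | empty => simp [sset]
  | insert a b ha ih =>
    rw [Finset.sum_insert ha, Finset.sum_insert ha]
    exact sset_add (sset_nsmul (hb (Finset.mem_insert_self _ _)) _)
      (ih ((Finset.subset_insert _ _).trans hb))

end SSet

section Freiman
variable {V : Type*} [AddCommGroup V] [Module ℚ V]

theorem sset_apply_nonpos {S : Finset V} (l : V →ₗ[ℚ] ℚ) (h : ∀ s ∈ S, l s ≤ 0) (j : ℕ) :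
    ∀ w ∈ sset S j, l w ≤ 0 := by
  induction j with
  | zero => simp [sset]
  | succ j ih =>
    intro w hw
    obtain ⟨s, hs, t, ht, rfl⟩ := mem_sset_succ.1 hw
    rw [map_add]
    linarith [h s hs, ih t ht]

theorem sset_apply_eq_zero {S : Finset V} (l : V →ₗ[ℚ] ℚ) (h : ∀ s ∈ S, l s = 0) (j : ℕ) :
    ∀ w ∈ sset S j, l w = 0 := by
  induction j with
  | zero => simp [sset]
  | succ j ih =>
    intro w hw
    obtain ⟨s, hs, t, ht, rfl⟩ := mem_sset_succ.1 hw
    rw [map_add, h s hs, ih t ht, add_zero]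

/-- existence of a visible facet -/
theorem exists_facet (S : Finset V) (p : V) (l₀ : V →ₗ[ℚ] ℚ) (h₀ : ∀ s ∈ S, l₀ s ≤ 0)
    (hp₀ : 0 < l₀ p) :
    ∃ l : V →ₗ[ℚ] ℚ, (∀ s ∈ S, l s ≤ 0) ∧ 0 < l p ∧
      ∀ q ∈ S, q ∈ Submodule.span ℚ ({s | s ∈ S ∧ l s = 0} ∪ {p}) := by
  classical
  by_contra hcon
  have key : ∀ N : ℕ, ∃ l : V →ₗ[ℚ] ℚ, (∀ s ∈ S, l s ≤ 0) ∧ 0 < l p ∧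
      N ≤ (S.filter (fun s => l s = 0)).card := by
    intro N
    induction N with
    | zero => exact ⟨l₀, h₀, hp₀, Nat.zero_le _⟩
    | succ N ih =>
      obtain ⟨l, hl, hlp, hN⟩ := ih
      have : ∃ q ∈ S, q ∉ Submodule.span ℚ ({s | s ∈ S ∧ l s = 0} ∪ {p}) := by
        by_contra h
        push Not at h
        exact hcon ⟨l, hl, hlp, h⟩
      obtain ⟨q₀, hq₀, hq₀'⟩ := this
      obtain ⟨μ', hμ', hker'⟩ := Submodule.exists_le_ker_of_notMem hq₀'
      obtain ⟨μ, hμ, hker⟩ : ∃ μ : V →ₗ[ℚ] ℚ, 0 < μ q₀ ∧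
          Submodule.span ℚ ({s | s ∈ S ∧ l s = 0} ∪ {p}) ≤ LinearMap.ker μ := by
        rcases lt_or_gt_of_ne hμ' with h | h
        · refine ⟨-μ', by simpa using h, fun x hx => ?_⟩
          have := hker' hx
          simp only [LinearMap.mem_ker] at this
          simp [this]
        · exact ⟨μ', h, hker'⟩
      have hμp : μ p = 0 := hker (Submodule.subset_span (Or.inr rfl))
      have hμZ : ∀ s ∈ S, l s = 0 → μ s = 0 := fun s hs h =>
        hker (Submodule.subset_span (Or.inl ⟨hs, h⟩))
      obtain ⟨q₁, hq₁, hmin⟩ := Finset.exists_min_image (S.filter (fun s => 0 < μ s))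
        (fun s => - l s / μ s) ⟨q₀, by simp [hq₀, hμ]⟩
      rw [Finset.mem_filter] at hq₁
      set c := - l q₁ / μ q₁ with hc
      have hc0 : 0 ≤ c := div_nonneg (by linarith [hl q₁ hq₁.1]) hq₁.2.le
      refine ⟨l + c • μ, ?_, by simpa [hμp] using hlp, ?_⟩
      · intro s hs
        simp only [LinearMap.add_apply, LinearMap.smul_apply, smul_eq_mul]
        by_cases hs' : 0 < μ s
        · have := hmin s (by simp [hs, hs'])
          rw [le_div_iff₀ hs'] at this
          linarith
        · have := mul_nonneg hc0 (neg_nonneg.2 (not_lt.1 hs'))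
          linarith [hl s hs]
      · refine Nat.succ_le_of_lt (lt_of_le_of_lt hN (Finset.card_lt_card ?_))
        rw [Finset.ssubset_iff_of_subset]
        · refine ⟨q₁, ?_, ?_⟩
          · have := hq₁.2.ne'
            simp only [Finset.mem_filter, hq₁.1, true_and, LinearMap.add_apply,
              LinearMap.smul_apply, smul_eq_mul, hc]
            field_simp
            ring
          · intro h
            rw [Finset.mem_filter] at h
            exact hq₁.2.ne' (hμZ _ h.1 h.2)
        · intro s hs
          rw [Finset.mem_filter] at hs ⊢
          refine ⟨hs.1, ?_⟩
          simp [hs.2, hμZ s hs.1 hs.2]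
  obtain ⟨l, -, -, h⟩ := key (S.card + 1)
  have := Finset.card_filter_le S (fun s => l s = 0)
  omega

theorem card_indep_sset {b : Finset V} (hb : LinearIndepOn ℚ id (b : Set V)) {d : ℕ}
    (hd : b.card = d + 1) (j : ℕ) : (d + j).choose d ≤ (sset b j).card := by
  classical
  have h1 : (b.finsuppAntidiag j).card = (d + j).choose d := by
    rw [Finset.card_finsuppAntidiag_nat_eq_choose, hd,
      show d + 1 + j - 1 = d + j by omega, Nat.choose_symm_add]
  rw [← h1]
  refine Finset.card_le_card_of_injOn (fun f => ∑ s ∈ b, f s • s) ?_ ?_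
  · intro f hf
    have hf := Finset.mem_coe.1 hf
    rw [Finset.mem_finsuppAntidiag] at hf
    have := sset_sum (Finset.Subset.refl b) f
    rw [hf.1] at this
    exact this
  · intro f hf g hg hfg
    have hf := Finset.mem_coe.1 hf
    have hg := Finset.mem_coe.1 hg
    rw [Finset.mem_finsuppAntidiag] at hf hg
    have h2 := (linearIndepOn_finset_iff.1 hb) (fun s => (f s : ℚ) - (g s : ℚ)) (by
      simp only [id, sub_smul, Finset.sum_sub_distrib, Nat.cast_smul_eq_nsmul]
      exact sub_eq_zero.2 hfg)
    ext s
    by_cases hs : s ∈ b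
    · have := h2 s hs
      have : (f s : ℚ) = g s := by linarith
      exact_mod_cast this
    · have h3 : f s = 0 := by
        by_contra h; exact hs (hf.2 (Finsupp.mem_support_iff.2 h))
      have h4 : g s = 0 := by
        by_contra h; exact hs (hg.2 (Finsupp.mem_support_iff.2 h))
      rw [h3, h4]

theorem freiman (h : V →ₗ[ℚ] ℚ) (N : ℕ) : ∀ (S : Finset V) (_ : S.card = N)
    (_ : ∀ s ∈ S, h s = 1) (d c : ℕ)
    (_ : Module.finrank ℚ (Submodule.span ℚ (S : Set V)) = d + 1) (_ : S.card = c + d) (j : ℕ),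
    c * (d + j).choose d ≤ (sset S (j + 1)).card := by
  classical
  induction N with
  | zero =>
    intro S hS _ d c hd hc j
    have : c = 0 := by omega
    simp [this]
  | succ N ih =>
    intro S hSN hS d c hd hc j
    have hSne : S.Nonempty := by rw [← Finset.card_pos]; omega
    -- a functional injective on S
    obtain ⟨φ, hφ⟩ := Module.exists_dual_forall_apply_ne_zero (K := ℚ)
      (fun x : {x : S × S // x.1 ≠ x.2} => (x.1.1 : V) - (x.1.2 : V))
      (fun x hx => x.2 (Subtype.ext (sub_eq_zero.1 hx)))
    have hinj : ∀ s ∈ S, ∀ t ∈ S, s ≠ t → φ s ≠ φ t := by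
      intro s hs t ht hst heq
      have := hφ ⟨(⟨s, hs⟩, ⟨t, ht⟩), fun h => hst (congrArg Subtype.val h)⟩
      simp [heq] at this
    obtain ⟨p, hp, hmax⟩ := Finset.exists_max_image S φ hSne
    set S' := S.erase p with hS'
    have hcard' : S'.card = N := by rw [Finset.card_erase_of_mem hp]; omega
    have hS'S : S' ⊆ S := Finset.erase_subset _ _
    have hins : insert p S' = S := Finset.insert_erase hp
    by_cases hpS : p ∈ Submodule.span ℚ (S' : Set V)
    · -- case 1
      have hspan : Submodule.span ℚ (S' : Set V) = Submodule.span ℚ (S : Set V) := by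
        rw [← hins, Finset.coe_insert, Submodule.span_insert_eq_span hpS]
      have hS'ne : S'.Nonempty := by
        rw [Finset.nonempty_iff_ne_empty]
        intro h0
        rw [h0] at hspan
        simp at hspan
        rw [← hspan] at hd
        simp at hd
      obtain ⟨q, hq, hqmax⟩ := Finset.exists_max_image S' φ hS'ne
      obtain ⟨l, hl, hlp, hfac⟩ := exists_facet S' p (φ - φ q • h)
        (fun s hs => by
          simp only [LinearMap.sub_apply, LinearMap.smul_apply, hS s (hS'S hs)]
          simpa using hqmax s hs)
        (by
          have h1 := hmax q (hS'S hq)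
          have h2 := hinj q (hS'S hq) p hp (Finset.ne_of_mem_erase hq)
          simp only [LinearMap.sub_apply, LinearMap.smul_apply, hS p hp]
          simpa using lt_of_le_of_ne h1 h2)
      set Z : Set V := {s | s ∈ S' ∧ l s = 0} ∪ {p} with hZ
      have hZS : Z ⊆ S := by
        rintro s (hs | hs)
        · exact hS'S hs.1
        · rw [Set.mem_singleton_iff.1 hs]; exact hp
      have hspanZ : Submodule.span ℚ Z = Submodule.span ℚ (S : Set V) := by
        apply le_antisymm (Submodule.span_mono hZS)
        rw [← hspan, Submodule.span_le]
        exact hfac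
      obtain ⟨b', hb'Z, hb'span, hb'ind⟩ := exists_linearIndependent ℚ Z
      have hfin : b'.Finite := (S.finite_toSet).subset (hb'Z.trans hZS)
      set b := hfin.toFinset with hb
      have hbS : b ⊆ S := fun x hx => by
        exact hZS (hb'Z (hfin.mem_toFinset.1 hx))
      have hbcoe : (b : Set V) = b' := hfin.coe_toFinset
      have hbind : LinearIndepOn ℚ id (b : Set V) := by rw [hbcoe]; exact hb'ind
      have hbcard : b.card = d + 1 := by
        rw [← hd, ← hspanZ, ← hb'span, ← hbcoe]
        exact (finrank_span_finset_eq_card hbind).symm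
      have hb0 : ∀ s ∈ b, 0 ≤ l s := by
        intro s hs
        rcases hb'Z (hfin.mem_toFinset.1 hs) with hs | hs
        · exact hs.2.ge
        · rw [Set.mem_singleton_iff.1 hs]; exact hlp.le
      have hbj := sset_apply_nonpos (S := b) (-l) (fun s hs => by simpa using hb0 s hs) j
      have hS'j := sset_apply_nonpos (S := S') l hl (j + 1)
      have hdisj : Disjoint (sset S' (j + 1)) ((sset b j).image (fun x => p + x)) := by
        rw [Finset.disjoint_left]
        intro x hx hx'
        obtain ⟨y, hy, rfl⟩ := Finset.mem_image.1 hx'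
        have h1 := hbj y hy
        have h2 := hS'j _ hx
        rw [map_add] at h2
        simp only [LinearMap.neg_apply] at h1
        linarith
      have hsub : (sset S' (j + 1)) ∪ ((sset b j).image (fun x => p + x)) ⊆ sset S (j + 1) := by
        apply Finset.union_subset (sset_mono hS'S _)
        intro x hx
        obtain ⟨y, hy, rfl⟩ := Finset.mem_image.1 hx
        exact mem_sset_succ.2 ⟨p, hp, y, sset_mono hbS _ hy, rfl⟩
      have h1 := Finset.card_le_card hsub
      rw [Finset.card_union_of_disjoint hdisj,
        Finset.card_image_of_injective _ (add_right_injective p)] at h1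
      have h2 := card_indep_sset hbind hbcard j
      have h3 := Finset.card_le_card hbS
      obtain ⟨c', rfl⟩ : ∃ c', c = c' + 1 := ⟨c - 1, by omega⟩
      have h4 := ih S' hcard' (fun s hs => hS s (hS'S hs)) d c' (by rw [hspan, hd])
        (by omega) j
      rw [Nat.succ_mul]
      omega
    · -- case 2
      have hp0 : p ≠ 0 := fun h0 => hpS (h0 ▸ Submodule.zero_mem _)
      have hrank : Module.finrank ℚ (Submodule.span ℚ (S' : Set V)) = d := by
        have h1 : Module.finrank ℚ (Submodule.span ℚ (S : Set V)) =
            Module.finrank ℚ (Submodule.span ℚ (S' : Set V)) + 1 := by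
          obtain ⟨b', hb'Z, hb'span, hb'ind⟩ := exists_linearIndependent ℚ (S' : Set V)
          have hfin : b'.Finite := (S'.finite_toSet).subset hb'Z
          have hbcoe : (hfin.toFinset : Set V) = b' := hfin.coe_toFinset
          have hpb : p ∉ hfin.toFinset := fun h => by
            have := hb'Z (hfin.mem_toFinset.1 h)
            exact hpS (Submodule.subset_span this)
          have hi : LinearIndepOn ℚ id ((insert p hfin.toFinset : Finset V) : Set V) := by
            rw [Finset.coe_insert, hbcoe]
            refine LinearIndepOn.insert hb'ind ?_
            simpa [hb'span] using hpS
          rw [← hins, Finset.coe_insert, Submodule.span_insert, ← hb'span,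
            ← Submodule.span_insert, ← hbcoe, ← Finset.coe_insert]
          have e1 := finrank_span_finset_eq_card hi
          have e2 := finrank_span_finset_eq_card (s := hfin.toFinset) (by rw [hbcoe]; exact hb'ind)
          rw [e1, e2, Finset.card_insert_of_notMem hpb]
        omega
      rcases Nat.eq_zero_or_pos d with rfl | hdpos
      · -- rank one
        have hS'e : S' = ∅ := by
          rw [Finset.eq_empty_iff_forall_notMem]
          intro s hs
          have : Module.Finite ℚ (Submodule.span ℚ (S' : Set V)) :=
            Module.Finite.span_of_finite ℚ S'.finite_toSet
          have h0 := Submodule.finrank_eq_zero.1 hrank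
          have : s ∈ Submodule.span ℚ (S' : Set V) := Submodule.subset_span hs
          rw [h0, Submodule.mem_bot] at this
          have h1 := hS s (hS'S hs)
          rw [this] at h1
          simp at h1
        have : c = 1 := by
          rw [hS'e] at hcard'
          simp at hcard'
          omega
        subst this
        simp only [Nat.choose_zero_right, mul_one]
        exact Finset.card_pos.2 ⟨_, sset_nsmul hp (j + 1)⟩
      · obtain ⟨e, rfl⟩ : ∃ e, d = e + 1 := ⟨d - 1, by omega⟩
        obtain ⟨f', hf', hfker'⟩ := Submodule.exists_le_ker_of_notMem hpS
        have hf0 : ∀ s ∈ S', f' s = 0 := fun s hs => hfker' (Submodule.subset_span hs)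
        have hIH : ∀ i, c * (e + i).choose e ≤ (sset S' (i + 1)).card := fun i =>
          ih S' hcard' (fun s hs => hS s (hS'S hs)) e c hrank (by omega) i
        have hval : ∀ i ≤ j, ∀ x ∈ (sset S' (i + 1)).image (fun x => (j - i) • p + x),
            f' x = ((j - i : ℕ) : ℚ) * f' p := by
          intro i hi x hx
          obtain ⟨y, hy, rfl⟩ := Finset.mem_image.1 hx
          rw [map_add, sset_apply_eq_zero f' hf0 _ y hy, map_nsmul, nsmul_eq_mul, add_zero]
        have hsub : (Finset.range (j + 1)).biUnion
            (fun i => (sset S' (i + 1)).image (fun x => (j - i) • p + x)) ⊆ sset S (j + 1) := by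
          intro x hx
          obtain ⟨i, hi, hx⟩ := Finset.mem_biUnion.1 hx
          obtain ⟨y, hy, rfl⟩ := Finset.mem_image.1 hx
          rw [Finset.mem_range] at hi
          have := sset_add (sset_nsmul hp (j - i)) (sset_mono hS'S _ hy)
          rwa [show j - i + (i + 1) = j + 1 by omega] at this
        have h1 := Finset.card_le_card hsub
        rw [Finset.card_biUnion] at h1
        · refine le_trans ?_ h1
          rw [show e + 1 + j = j + e + 1 by ring, ← Nat.sum_range_add_choose, Finset.mul_sum]
          apply Finset.sum_le_sum
          intro i _
          rw [Finset.card_image_of_injective _ (add_right_injective _), add_comm i e]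
          exact hIH i
        · intro i hi i' hi' hne
          rw [Finset.mem_coe, Finset.mem_range] at hi hi'
          change Disjoint _ _
          rw [Finset.disjoint_left]
          intro x hx hx'
          have e1 := hval i (by omega) x hx
          have e2 := hval i' (by omega) x hx'
          rw [e1] at e2
          have := mul_right_cancel₀ hf' e2
          have : j - i = j - i' := by exact_mod_cast this
          omega

end Freiman

section Val

/-- Extension of a valuation ring with residue field `k` to an algebraic extension. -/
theorem exists_extension_val {k E K : Type*} [Field k] [IsAlgClosed k] [Field E] [Field K]
    [Algebra k E] [Algebra k K] [Algebra E K] [IsScalarTower k E K] [Algebra.IsAlgebraic E K]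
    (A : ValuationSubring E) (hk : ∀ c : k, algebraMap k E c ∈ A)
    (hres : ∀ a ∈ A, ∃ c : k, A.valuation (a - algebraMap k E c) < 1) :
    ∃ B : ValuationSubring K, (∀ c : k, c ≠ 0 → B.valuation (algebraMap k K c) = 1) ∧
      (∀ a : E, A.valuation a < 1 → B.valuation (algebraMap E K a) < 1) ∧
      (∀ x : K, B.valuation x ≤ 1 → ∃ c : k, B.valuation (x - algebraMap k K c) < 1) := by
  obtain ⟨B, hB, hloc⟩ := IsLocalRing.exists_factor_valuationRing
    ((algebraMap E K).comp A.subtype)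
  have h1 : ∀ a ∈ A, B.valuation (algebraMap E K a) ≤ 1 := fun a ha =>
    (B.valuation_le_one_iff _).2 (hB ⟨a, ha⟩)
  have h2 : ∀ a : E, A.valuation a < 1 → B.valuation (algebraMap E K a) < 1 := by
    intro a ha
    have haA : a ∈ A := (A.valuation_le_one_iff a).1 ha.le
    refine lt_of_le_of_ne (h1 a haA) fun heq => ?_
    have hu : IsUnit (⟨algebraMap E K a, hB ⟨a, haA⟩⟩ : B) := (B.valuation_eq_one_iff _).2 heq
    have := hloc.map_nonunit ⟨a, haA⟩ hu
    exact ha.ne ((A.valuation_eq_one_iff ⟨a, haA⟩).1 this)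
  have h3 : ∀ c : k, c ≠ 0 → B.valuation (algebraMap k K c) = 1 := by
    intro c hc
    have e1 : ∀ c : k, B.valuation (algebraMap k K c) ≤ 1 := fun c => by
      rw [IsScalarTower.algebraMap_apply k E K]; exact h1 _ (hk c)
    have e2 := e1 c
    have e3 := e1 c⁻¹
    have e4 : B.valuation (algebraMap k K c) * B.valuation (algebraMap k K c⁻¹) = 1 := by
      rw [← map_mul, ← map_mul, mul_inv_cancel₀ hc, map_one, map_one]
    refine le_antisymm e2 ?_
    calc (1 : B.ValueGroup) = _ := e4.symm
      _ ≤ B.valuation (algebraMap k K c) * 1 := by gcongr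
      _ = _ := mul_one _
  refine ⟨B, h3, h2, ?_⟩
  intro x hx
  obtain ⟨p, hp0, hpx⟩ := Algebra.IsAlgebraic.isAlgebraic (R := E) x
  have hne : p.support.Nonempty := Polynomial.support_nonempty.2 hp0
  obtain ⟨i₀, hi₀, hmax⟩ := Finset.exists_max_image p.support (fun i => A.valuation (p.coeff i)) hne
  have hc0 : p.coeff i₀ ≠ 0 := Polynomial.mem_support_iff.1 hi₀
  have hv0 : A.valuation (p.coeff i₀) ≠ 0 := (Valuation.ne_zero_iff _).2 hc0
  set a : ℕ → E := fun i => p.coeff i / p.coeff i₀ with ha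
  have haA : ∀ i, a i ∈ A := by
    intro i
    rw [← A.valuation_le_one_iff, ha, map_div₀]
    refine div_le_one_of_le₀ ?_ zero_le
    by_cases hi : i ∈ p.support
    · exact hmax i hi
    · rw [Polynomial.notMem_support_iff.1 hi, map_zero]; exact zero_le
  choose! c hc using fun i => hres (a i) (haA i)
  -- the reduced polynomial
  set q : Polynomial k := ∑ i ∈ Finset.range (p.natDegree + 1), Polynomial.monomial i (c i) with hq
  have hi₀' : i₀ ∈ Finset.range (p.natDegree + 1) :=
    Finset.mem_range.2 (Nat.lt_succ_of_le (Polynomial.le_natDegree_of_mem_supp _ hi₀))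
  have hq0 : q ≠ 0 := by
    intro h0
    have h4 : q.coeff i₀ = c i₀ := by
      rw [hq, Polynomial.finsetSum_coeff]
      simp only [Polynomial.coeff_monomial]
      rw [Finset.sum_ite_eq' _ i₀]
      simp only [hi₀', if_true]
    have h5 := hc i₀
    rw [← h4, h0] at h5
    simp [ha, hc0] at h5
  have hsum : ∑ i ∈ Finset.range (p.natDegree + 1), algebraMap E K (a i) * x ^ i = 0 := by
    have : ∑ i ∈ Finset.range (p.natDegree + 1), algebraMap E K (a i) * x ^ i
        = (algebraMap E K (p.coeff i₀))⁻¹ * Polynomial.aeval x p := by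
      rw [Polynomial.aeval_eq_sum_range, Finset.mul_sum]
      refine Finset.sum_congr rfl fun i _ => ?_
      rw [ha, Algebra.smul_def]
      simp only [map_div₀]
      ring
    rw [this, hpx, mul_zero]
  have hqx : B.valuation (Polynomial.aeval x q) < 1 := by
    have : Polynomial.aeval x q = - ∑ i ∈ Finset.range (p.natDegree + 1),
        algebraMap E K (a i - algebraMap k E (c i)) * x ^ i := by
      rw [← sub_eq_zero, sub_neg_eq_add, ← hsum, hq, map_sum, ← Finset.sum_add_distrib]
      refine Finset.sum_congr rfl fun i _ => ?_
      rw [Polynomial.aeval_monomial, map_sub, ← IsScalarTower.algebraMap_apply]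
      ring
    rw [this, Valuation.map_neg]
    refine Valuation.map_sum_lt _ one_ne_zero fun i _ => ?_
    rw [map_mul, map_pow]
    calc _ ≤ B.valuation (algebraMap E K (a i - algebraMap k E (c i))) * 1 := by
          gcongr; exact pow_le_one₀ zero_le hx
      _ < 1 := by rw [mul_one]; exact h2 _ (hc i)
  -- factor
  have hsplit := IsAlgClosed.splits q
  have hfac : Polynomial.aeval x q = algebraMap k K q.leadingCoeff *
      (q.roots.map (fun r => x - algebraMap k K r)).prod := by
    conv_lhs => rw [hsplit.eq_prod_roots]
    rw [map_mul, Polynomial.aeval_C, map_multiset_prod, Multiset.map_map]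
    congr 2
    refine Multiset.map_congr rfl fun r _ => ?_
    simp
  rw [hfac, map_mul, h3 _ (Polynomial.leadingCoeff_ne_zero.2 hq0), one_mul] at hqx
  by_contra hcon
  push Not at hcon
  refine absurd hqx (not_lt.2 ?_)
  generalize q.roots = s
  induction s using Multiset.induction_on with
  | empty => simp
  | cons r s ih =>
    rw [Multiset.map_cons, Multiset.prod_cons, map_mul]
    exact Right.one_le_mul (hcon r) ih

end Val

section HahnPart

/-- The valuation ring of a Hahn series field. -/
noncomputable def hahnVal (Γ k : Type*) [AddCommGroup Γ] [LinearOrder Γ] [IsOrderedAddMonoid Γ]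
    [Field k] : ValuationSubring (HahnSeries Γ k) where
  carrier := {x | 0 ≤ x.orderTop}
  mul_mem' := by
    intro a b ha hb
    simp only [Set.mem_ofPred_eq, ← HahnSeries.addVal_apply] at *
    rw [AddValuation.map_mul]
    exact add_nonneg ha hb
  one_mem' := by simp
  add_mem' := by
    intro a b ha hb
    simp only [Set.mem_ofPred_eq, ← HahnSeries.addVal_apply] at *
    exact le_trans (le_min ha hb) (AddValuation.map_add _ _ _)
  zero_mem' := by simp
  neg_mem' := by
    intro a ha
    simpa using ha
  mem_or_inv_mem' := by
    intro x
    by_cases hx : x = 0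
    · left; simp [hx]
    have h : (HahnSeries.addVal Γ k x) + (HahnSeries.addVal Γ k x⁻¹) = 0 := by
      rw [← AddValuation.map_mul, mul_inv_cancel₀ hx, AddValuation.map_one]
    simp only [Set.mem_ofPred_eq, ← HahnSeries.addVal_apply]
    rcases le_total 0 (HahnSeries.addVal Γ k x) with h1 | h1
    · exact Or.inl h1
    · refine Or.inr ?_
      by_contra h2
      push Not at h2
      have : HahnSeries.addVal Γ k x + HahnSeries.addVal Γ k x⁻¹ < 0 := by
        calc _ ≤ 0 + HahnSeries.addVal Γ k x⁻¹ := by gcongr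
          _ < 0 := by rwa [zero_add]
      exact this.ne h

variable {Γ k : Type*} [AddCommGroup Γ] [LinearOrder Γ] [IsOrderedAddMonoid Γ] [Field k]

theorem mem_hahnVal {x : HahnSeries Γ k} : x ∈ hahnVal Γ k ↔ 0 ≤ x.orderTop := Iff.rfl

theorem hahnVal_lt_one {x : HahnSeries Γ k} (hx : 0 < x.orderTop) :
    (hahnVal Γ k).valuation x < 1 := by
  rw [← ValuationSubring.mem_nonunits_iff, ValuationSubring.mem_nonunits_iff_or]
  by_cases h0 : x = 0
  · exact Or.inl h0
  · refine Or.inr fun h => ?_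
    rw [mem_hahnVal, ← HahnSeries.addVal_apply] at h
    rw [← HahnSeries.addVal_apply] at hx
    have : (HahnSeries.addVal Γ k x) + (HahnSeries.addVal Γ k x⁻¹) = 0 := by
      rw [← AddValuation.map_mul, mul_inv_cancel₀ h0, AddValuation.map_one]
    exact (add_pos_of_pos_of_nonneg hx h).ne' this

theorem hahn_single_zpow (g : Γ) (e : ℤ) :
    (HahnSeries.single g (1 : k)) ^ e = HahnSeries.single (e • g) (1 : k) := by
  cases e with
  | ofNat e =>
    simp [HahnSeries.single_pow]
  | negSucc e =>
    rw [zpow_negSucc, HahnSeries.single_pow, one_pow]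
    refine inv_eq_of_mul_eq_one_left ?_
    rw [HahnSeries.single_mul_single, negSucc_zsmul]
    simp

variable {ι : Type*} [LinearOrder ι]

/-- the embedding of polynomials into Hahn series -/
noncomputable def polyHahn (ι k : Type*) [LinearOrder ι] [Field k] :
    MvPolynomial ι k →ₐ[k] HahnSeries (Lex (ι →₀ ℤ)) k :=
  MvPolynomial.aeval (fun i => HahnSeries.single (toLex (Finsupp.single i (1 : ℤ))) (1 : k))

theorem polyHahn_monomial (a : ι →₀ ℕ) (c : k) :
    polyHahn ι k (MvPolynomial.monomial a c) =
      HahnSeries.single (toLex (a.mapRange (Nat.cast : ℕ → ℤ) Nat.cast_zero)) c := by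
  rw [polyHahn, MvPolynomial.aeval_monomial]
  have : (a.prod fun i e => (HahnSeries.single (toLex (Finsupp.single i (1 : ℤ))) (1 : k)) ^ e) =
      HahnSeries.single (toLex (a.mapRange (Nat.cast : ℕ → ℤ) Nat.cast_zero)) (1 : k) := by
    induction a using Finsupp.induction_linear with
    | zero => simp
    | add f g hf hg =>
      rw [Finsupp.prod_add_index' (by simp) (by intros; rw [pow_add]), hf, hg,
        HahnSeries.single_mul_single, one_mul, Finsupp.mapRange_add (by simp), toLex_add]
    | single i e =>
      rw [Finsupp.prod_single_index (by simp), HahnSeries.single_pow, one_pow,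
        Finsupp.mapRange_single]
      have : e • toLex (Finsupp.single i (1 : ℤ)) = toLex (e • Finsupp.single i (1 : ℤ)) := rfl
      rw [this]
      simp
  rw [this, HahnSeries.algebraMap_apply, HahnSeries.C_apply, HahnSeries.single_mul_single]
  simp

theorem polyHahn_coeff (f : MvPolynomial ι k) (a : ι →₀ ℕ) :
    (polyHahn ι k f).coeff (toLex (a.mapRange (Nat.cast : ℕ → ℤ) Nat.cast_zero)) = f.coeff a := by
  classical
  induction f using MvPolynomial.induction_on' with
  | monomial b c =>
    rw [polyHahn_monomial, MvPolynomial.coeff_monomial, HahnSeries.coeff_single]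
    have : (toLex (a.mapRange (Nat.cast : ℕ → ℤ) Nat.cast_zero) =
        toLex (b.mapRange (Nat.cast : ℕ → ℤ) Nat.cast_zero)) ↔ b = a := by
      rw [toLex_inj, (Finsupp.mapRange_injective _ _ Nat.cast_injective).eq_iff, eq_comm]
    simp only [this]
  | add p q hp hq => rw [map_add, HahnSeries.coeff_add, hp, hq, MvPolynomial.coeff_add]

theorem polyHahn_injective : Function.Injective (polyHahn ι k) := by
  rw [injective_iff_map_eq_zero]
  intro f hf
  ext a
  rw [← polyHahn_coeff, hf]
  simp

end HahnPart

set_option synthInstance.maxHeartbeats 200000 in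
theorem exists_good_valuation_basis {k K ι : Type*} [Field k] [IsAlgClosed k] [Field K]
    [Algebra k K] [LinearOrder ι] (z : ι → K) (hz : IsTranscendenceBasis k z) :
    ∃ B : ValuationSubring K, (∀ c : k, c ≠ 0 → B.valuation (algebraMap k K c) = 1) ∧
      (∀ x : K, B.valuation x ≤ 1 → ∃ c : k, B.valuation (x - algebraMap k K c) < 1) ∧
      (∀ n : ι →₀ ℤ, B.valuation (n.prod fun i e => z i ^ e) = 1 → n = 0) := by
  let E := IntermediateField.adjoin k (Set.range z)
  let ψ : FractionRing (MvPolynomial ι k) →ₐ[k] HahnSeries (Lex (ι →₀ ℤ)) k :=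
    IsFractionRing.liftAlgHom (g := polyHahn ι k) polyHahn_injective
  let φ : E →ₐ[k] HahnSeries (Lex (ι →₀ ℤ)) k :=
    ψ.comp (hz.1.aevalEquivField.symm : E →ₐ[k] FractionRing (MvPolynomial ι k))
  let A : ValuationSubring E := (hahnVal (Lex (ι →₀ ℤ)) k).comap (φ : E →+* _)
  have hmemA : ∀ a : E, a ∈ A ↔ 0 ≤ (φ a).orderTop := fun a => Iff.rfl
  have hltA : ∀ a : E, 0 < (φ a).orderTop → A.valuation a < 1 := by
    intro a ha
    have := hahnVal_lt_one ha
    rw [← ValuationSubring.mem_nonunits_iff, ValuationSubring.mem_nonunits_iff_or] at this ⊢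
    rcases this with h | h
    · exact Or.inl ((map_eq_zero φ).1 h)
    · refine Or.inr fun h' => h ?_
      rw [hmemA, map_inv₀] at h'
      exact h'
  have : Algebra.IsAlgebraic E K := hz.isAlgebraic_field
  obtain ⟨B, h1, h2, h3⟩ := exists_extension_val (k := k) (K := K) A
    (fun c => by
      rw [hmemA, AlgHom.commutes, HahnSeries.algebraMap_apply, HahnSeries.C_apply]
      exact HahnSeries.orderTop_single_le)
    (fun a ha => by
      refine ⟨(φ a).coeff 0, hltA _ ?_⟩
      rw [map_sub, AlgHom.commutes, HahnSeries.algebraMap_apply, HahnSeries.C_apply]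
      rw [hmemA] at ha
      rw [lt_iff_le_and_ne]
      have hle : 0 ≤ (φ a - HahnSeries.single 0 (algebraMap k k ((φ a).coeff 0))).orderTop := by
        refine (hahnVal (Lex (ι →₀ ℤ)) k).sub_mem ha ?_
        exact HahnSeries.orderTop_single_le
      refine ⟨hle, fun heq => ?_⟩
      have h0 : (φ a - HahnSeries.single 0 (algebraMap k k ((φ a).coeff 0))).coeff 0 = 0 := by
        simp
      exact HahnSeries.coeff_orderTop_ne heq.symm h0)
  refine ⟨B, h1, h3, ?_⟩
  let z' : ι → E := fun i => ⟨z i, IntermediateField.subset_adjoin k _ ⟨i, rfl⟩⟩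
  have hφz : ∀ i, φ (z' i) = HahnSeries.single (toLex (Finsupp.single i (1 : ℤ))) (1 : k) := by
    intro i
    have : hz.1.aevalEquivField (algebraMap (MvPolynomial ι k) _ (MvPolynomial.X i)) = z' i := by
      apply Subtype.ext
      rw [hz.1.aevalEquivField_algebraMap_apply_coe]
      simp [z']
    rw [← this]
    simp [φ, ψ, IsFractionRing.liftAlgHom, polyHahn]
  have hφn : ∀ n : ι →₀ ℤ, φ (n.prod fun i e => z' i ^ e) = HahnSeries.single (toLex n) (1 : k) := by
    intro n
    induction n using Finsupp.induction_linear with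
    | zero => simp
    | add f g hf hg =>
      rw [Finsupp.prod_add_index' (by simp)
        (by
          intro i a b
          refine zpow_add₀ ?_ _ _
          intro h0
          have := hφz i
          rw [h0, map_zero] at this
          exact one_ne_zero (HahnSeries.single_eq_zero_iff.1 this.symm)), map_mul, hf, hg,
        HahnSeries.single_mul_single, one_mul, toLex_add]
    | single i e =>
      rw [Finsupp.prod_single_index (by simp), map_zpow₀, hφz, hahn_single_zpow]
      have : e • toLex (Finsupp.single i (1 : ℤ)) = toLex (e • Finsupp.single i (1 : ℤ)) := rfl
      rw [this]
      simp
  have hpos : ∀ n : ι →₀ ℤ, 0 < toLex n → B.valuation (n.prod fun i e => z i ^ e) < 1 := by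
    intro n hn
    have := h2 (n.prod fun i e => z' i ^ e) (hltA _ (by
      rw [hφn, HahnSeries.orderTop_single one_ne_zero]
      exact_mod_cast hn))
    have e : algebraMap E K (n.prod fun i e => z' i ^ e) = n.prod fun i e => z i ^ e := by
      simp only [Finsupp.prod, map_prod, map_zpow₀]
      rfl
    rwa [e] at this
  intro n hn
  rcases lt_trichotomy 0 (toLex n) with h | h | h
  · exact absurd hn (hpos n h).ne
  · exact (toLex_inj.1 h).symm
  · exfalso
    have h4 := hpos (-n) (by rw [toLex_neg]; exact neg_pos.2 h)
    have : ((-n).prod fun i e => z i ^ e) = (n.prod fun i e => z i ^ e)⁻¹ := by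
      simp [Finsupp.prod, Finsupp.support_neg]
    rw [this, map_inv₀, hn, inv_one] at h4
    exact lt_irrefl _ h4

theorem exists_good_valuation {k K : Type*} [Field k] [IsAlgClosed k] [Field K]
    [Algebra k K] {ι : Type*} (z : ι → K) (hz : AlgebraicIndependent k z) :
    ∃ B : ValuationSubring K, (∀ c : k, c ≠ 0 → B.valuation (algebraMap k K c) = 1) ∧
      (∀ x : K, B.valuation x ≤ 1 → ∃ c : k, B.valuation (x - algebraMap k K c) < 1) ∧
      (∀ n : ι →₀ ℤ, B.valuation (n.prod fun i e => z i ^ e) = 1 → n = 0) := by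
  classical
  obtain ⟨t, hst, ht⟩ := exists_isTranscendenceBasis_superset (algebraicIndependent_subtype_range hz.injective |>.2 hz)
  let _ : LinearOrder t := IsWellOrder.linearOrder WellOrderingRel
  obtain ⟨B, h1, h2, h3⟩ := exists_good_valuation_basis ((↑) : t → K) ht
  refine ⟨B, h1, h2, fun n hn => ?_⟩
  let g : ι ↪ t := ⟨fun i => ⟨z i, hst ⟨i, rfl⟩⟩, fun i j h => hz.injective (congrArg Subtype.val h)⟩
  have := h3 (n.embDomain g) (by rw [Finsupp.prod_embDomain]; exact hn)
  exact Finsupp.embDomain_eq_zero.1 this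

section Std

variable {k : Type*} [Field k] {n : ℕ} (P : Ideal (MvPolynomial (Fin (n+1)) k))

/-- The class of a monomial in the quotient. -/
noncomputable def qmon (a : Fin (n+1) →₀ ℕ) : MvPolynomial (Fin (n+1)) k ⧸ P :=
  Ideal.Quotient.mkₐ k P (monomial a 1)

/-- The graded pieces of the quotient. -/
noncomputable def qpiece (j : ℕ) : Submodule k (MvPolynomial (Fin (n+1)) k ⧸ P) :=
  (homogeneousSubmodule (Fin (n+1)) k j).map (Ideal.Quotient.mkₐ k P).toLinearMap

theorem qmon_add (a b : Fin (n+1) →₀ ℕ) : qmon P (a + b) = qmon P a * qmon P b := by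
  rw [qmon, qmon, qmon, ← map_mul, monomial_mul, one_mul]

theorem mk_eq_sum (f : MvPolynomial (Fin (n+1)) k) :
    Ideal.Quotient.mkₐ k P f = ∑ a ∈ f.support, f.coeff a • qmon P a := by
  conv_lhs => rw [f.as_sum]
  rw [map_sum]
  refine Finset.sum_congr rfl fun a _ => ?_
  rw [qmon, ← map_smul, smul_monomial, smul_eq_mul, mul_one]

/-- standard monomials -/
def IsStd (a : Fin (n+1) →₀ ℕ) : Prop :=
  qmon P a ∉ Submodule.span k (qmon P '' {b | toLex b < toLex a ∧ b.degree = a.degree})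

theorem not_isStd_add {a : Fin (n+1) →₀ ℕ} (ha : ¬ IsStd P a) (c : Fin (n+1) →₀ ℕ) :
    ¬ IsStd P (a + c) := by
  rw [IsStd, not_not] at ha ⊢
  have h1 := Submodule.mem_map_of_mem (f := LinearMap.mulRight k (qmon P c)) ha
  rw [LinearMap.mulRight_apply, ← qmon_add, Submodule.map_span] at h1
  refine Submodule.span_mono ?_ h1
  rintro _ ⟨_, ⟨b, ⟨hb, hb'⟩, rfl⟩, rfl⟩
  refine ⟨b + c, ⟨?_, ?_⟩, ?_⟩
  · rw [toLex_add, toLex_add]; exact add_lt_add_left hb _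
  · rw [map_add, map_add, hb']
  · rw [qmon_add]; rfl

theorem qmon_mem_span_std (a : Fin (n+1) →₀ ℕ) :
    qmon P a ∈ Submodule.span k (qmon P '' {b | IsStd P b ∧ b.degree = a.degree}) := by
  suffices H : ∀ x : Lex (Fin (n+1) →₀ ℕ), qmon P (ofLex x) ∈
      Submodule.span k (qmon P '' {b | IsStd P b ∧ b.degree = (ofLex x).degree}) from H (toLex a)
  intro x
  induction x using WellFoundedLT.induction with
  | ind x ih =>
    by_cases hx : IsStd P (ofLex x)
    · exact Submodule.subset_span ⟨_, ⟨hx, rfl⟩, rfl⟩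
    · rw [IsStd, not_not] at hx
      refine Submodule.span_le.2 ?_ hx
      rintro _ ⟨b, ⟨hb, hb'⟩, rfl⟩
      have := ih (toLex b) hb
      simp only [ofLex_toLex, hb'] at this
      exact this

theorem qpiece_le (j : ℕ) :
    qpiece P j ≤ Submodule.span k (qmon P '' {b | IsStd P b ∧ b.degree = j}) := by
  rintro _ ⟨f, hf, rfl⟩
  have hf' : f.IsHomogeneous j := hf
  change Ideal.Quotient.mkₐ k P f ∈ _
  rw [mk_eq_sum]
  refine Submodule.sum_mem _ fun a ha => Submodule.smul_mem _ _ ?_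
  have : a.degree = j := by
    have := hf' (mem_support_iff.1 ha)
    rwa [Finsupp.degree_eq_weight_one]
  have h := qmon_mem_span_std P a
  rwa [this] at h

theorem algInd_of_std (hhom : IsHomogeneousIdeal P) (T : Finset (Fin (n+1)))
    (hT : ∀ a : Fin (n+1) →₀ ℕ, a.support ⊆ T → IsStd P a) :
    AlgebraicIndependent k (fun i : T => Ideal.Quotient.mkₐ k P (X (i : Fin (n+1)))) := by
  classical
  rw [algebraicIndependent_iff]
  intro p hp
  by_contra hp0
  set f : MvPolynomial (Fin (n+1)) k := rename Subtype.val p with hf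
  have hf0 : f ≠ 0 := by
    intro h
    exact hp0 (rename_injective _ Subtype.val_injective (by rw [← hf, h, map_zero]))
  have hfsupp : ∀ a ∈ f.support, a.support ⊆ T := by
    intro a ha i hi
    rw [hf, support_rename_of_injective Subtype.val_injective] at ha
    obtain ⟨b, _, rfl⟩ := Finset.mem_image.1 ha
    have := Finsupp.mapDomain_support hi
    obtain ⟨i', _, rfl⟩ := Finset.mem_image.1 this
    exact i'.2
  have hfP : f ∈ P := by
    rw [← Ideal.Quotient.eq_zero_iff_mem]
    have : Ideal.Quotient.mkₐ k P f = 0 := by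
      rw [← hp, hf]
      have : (aeval fun i : T => Ideal.Quotient.mkₐ k P (X (i : Fin (n+1)))) =
          (Ideal.Quotient.mkₐ k P).comp (rename Subtype.val) := by
        ext i
        simp
      rw [this]
      rfl
    exact this
  obtain ⟨a₀, ha₀⟩ := support_nonempty.2 hf0
  set g := homogeneousComponent a₀.degree f with hg
  have hgP : g ∈ P := hhom f hfP _
  have hgsupp : ∀ a ∈ g.support, a ∈ f.support ∧ a.degree = a₀.degree := by
    intro a ha
    rw [mem_support_iff, hg, coeff_homogeneousComponent] at ha
    split_ifs at ha with h
    · exact ⟨mem_support_iff.2 ha, h⟩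
    · exact absurd rfl ha
  have hg0 : a₀ ∈ g.support := by
    rw [mem_support_iff, hg, coeff_homogeneousComponent, if_pos rfl]
    exact mem_support_iff.1 ha₀
  obtain ⟨a, ha, hmax⟩ := Finset.exists_max_image g.support (fun b => toLex b) ⟨a₀, hg0⟩
  have hstd := hT a (hfsupp a (hgsupp a ha).1)
  apply hstd
  have hsum := mk_eq_sum P g
  have hz : Ideal.Quotient.mkₐ k P g = 0 := Ideal.Quotient.eq_zero_iff_mem.2 hgP
  rw [hz, ← Finset.add_sum_erase _ _ ha] at hsum
  have hc : g.coeff a ≠ 0 := mem_support_iff.1 ha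
  have : qmon P a = -((g.coeff a)⁻¹ • ∑ b ∈ g.support.erase a, g.coeff b • qmon P b) := by
    rw [eq_neg_iff_add_eq_zero]
    have h2 := congrArg (fun x => (g.coeff a)⁻¹ • x) hsum
    simp only [smul_zero, smul_add, smul_smul, inv_mul_cancel₀ hc, one_smul] at h2
    exact h2.symm
  rw [this]
  refine Submodule.neg_mem _ (Submodule.smul_mem _ _ (Submodule.sum_mem _ fun b hb =>
    Submodule.smul_mem _ _ (Submodule.subset_span ⟨b, ⟨?_, ?_⟩, rfl⟩)))
  · have hb' := Finset.mem_erase.1 hb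
    exact lt_of_le_of_ne (hmax b hb'.2) fun h => hb'.1 (toLex_inj.1 h)
  · have hb' := Finset.mem_erase.1 hb
    rw [(hgsupp b hb'.2).2, (hgsupp a ha).2]

theorem sum_hilb_le (d : ℕ)
    (hno : ∀ T : Finset (Fin (n+1)), T.card = d + 1 →
      ∃ a : Fin (n+1) →₀ ℕ, a.support ⊆ T ∧ ¬ IsStd P a) :
    ∃ C : ℕ, ∀ J : ℕ, 1 ≤ J → ∑ i ∈ Finset.range J, hilbF k P i ≤ C * J ^ d := by
  classical
  choose! aT haT using hno
  set c : ℕ := (∑ T : Finset (Fin (n+1)), (aT T).degree) + 1 with hc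
  have hcT : ∀ T i, aT T i ≤ c := by
    intro T i
    have h1 : aT T i ≤ (aT T).degree := Finsupp.le_degree i _
    have h2 := Finset.single_le_sum (f := fun T => (aT T).degree) (fun _ _ => Nat.zero_le _)
      (Finset.mem_univ T)
    omega
  have hbig : ∀ a, IsStd P a → (Finset.univ.filter (fun i => c ≤ a i)).card ≤ d := by
    intro a ha
    by_contra hcon
    push Not at hcon
    obtain ⟨T, hTs, hTc⟩ := Finset.exists_subset_card_eq (Nat.succ_le_of_lt hcon)
    obtain ⟨h1, h2⟩ := haT T hTc
    have hle : aT T ≤ a := by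
      intro i
      by_cases hi : i ∈ T
      · have := (Finset.mem_filter.1 (hTs hi)).2
        exact (hcT T i).trans this
      · have : aT T i = 0 := by
          by_contra h; exact hi (h1 (Finsupp.mem_support_iff.2 h))
        omega
    have := not_isStd_add P h2 (a - aT T)
    rw [add_tsub_cancel_of_le hle] at this
    exact this ha
  let box : ℕ → Finset (Fin (n+1)) → Finset (Fin (n+1) → ℕ) := fun J T =>
    Fintype.piFinset (fun i => if i ∈ T then Finset.range J else Finset.range c)
  let F : ℕ → Finset (Fin (n+1) → ℕ) := fun J =>
    ((Finset.univ : Finset (Finset (Fin (n+1)))).filter (fun T => T.card ≤ d)).biUnion (box J)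
  have hbox : ∀ J T, 1 ≤ J → T.card ≤ d → (box J T).card ≤ c ^ (n+1) * J ^ d := by
    intro J T hJ hT
    rw [Fintype.card_piFinset]
    have : ∀ i : Fin (n+1), (if i ∈ T then Finset.range J else Finset.range c).card ≤
        c * (if i ∈ T then J else 1) := by
      intro i
      split_ifs
      · rw [Finset.card_range]; exact Nat.le_mul_of_pos_left _ (by omega)
      · simp
    refine (Finset.prod_le_prod' fun i _ => this i).trans ?_
    rw [Finset.prod_mul_distrib, Finset.prod_const, Finset.card_univ, Fintype.card_fin,
      Finset.prod_ite_mem, Finset.univ_inter, Finset.prod_const]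
    gcongr
  have hF : ∀ J, 1 ≤ J → (F J).card ≤ (2 ^ (n+1) * c ^ (n+1)) * J ^ d := by
    intro J hJ
    refine Finset.card_biUnion_le.trans ?_
    refine (Finset.sum_le_sum (g := fun _ => c ^ (n+1) * J ^ d) fun T hT =>
      hbox J T hJ (Finset.mem_filter.1 hT).2).trans ?_
    rw [Finset.sum_const, smul_eq_mul, mul_assoc]
    gcongr
    refine (Finset.card_filter_le _ _).trans ?_
    simp
  refine ⟨2 ^ (n+1) * c ^ (n+1), fun J hJ => le_trans ?_ (hF J hJ)⟩
  let M : ℕ → Finset (Fin (n+1) → ℕ) := fun i => (F J).filter (fun f =>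
    IsStd P (Finsupp.equivFunOnFinite.symm f) ∧ (Finsupp.equivFunOnFinite.symm f).degree = i)
  have hM : ∀ i ∈ Finset.range J, hilbF k P i ≤ (M i).card := by
    intro i hi
    have hle : qpiece P i ≤ Submodule.span k
        (((M i).image (fun f => qmon P (Finsupp.equivFunOnFinite.symm f)) :
          Finset (MvPolynomial (Fin (n+1)) k ⧸ P)) : Set (MvPolynomial (Fin (n+1)) k ⧸ P)) := by
      refine (qpiece_le P i).trans (Submodule.span_mono ?_)
      rintro _ ⟨b, ⟨hb, hb'⟩, rfl⟩
      rw [Finset.coe_image]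
      refine ⟨⇑b, ?_, ?_⟩
      · rw [Finset.mem_coe, Finset.mem_filter]
        have hbb : Finsupp.equivFunOnFinite.symm ⇑b = b := Finsupp.equivFunOnFinite.symm_apply_apply b
        rw [hbb]
        refine ⟨?_, hb, hb'⟩
        refine Finset.mem_biUnion.2 ⟨Finset.univ.filter (fun i => c ≤ b i), ?_, ?_⟩
        · exact Finset.mem_filter.2 ⟨Finset.mem_univ _, hbig b hb⟩
        · rw [Fintype.mem_piFinset]
          intro l
          have hl : b l ≤ b.degree := Finsupp.le_degree l _
          rw [Finset.mem_range] at hi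
          split_ifs with h
          · rw [Finset.mem_range]; omega
          · rw [Finset.mem_filter] at h
            rw [Finset.mem_range]
            by_contra h'
            exact h ⟨Finset.mem_univ _, not_lt.1 h'⟩
      · exact congrArg (qmon P) (Finsupp.equivFunOnFinite.symm_apply_apply b)
    have h1 : Module.finrank k (qpiece P i) ≤ _ := Submodule.finrank_mono hle
    exact h1.trans ((finrank_span_finset_le_card _).trans Finset.card_image_le)
  refine (Finset.sum_le_sum hM).trans ?_
  rw [← Finset.card_biUnion]
  · refine Finset.card_le_card ?_
    intro f hf
    obtain ⟨i, _, hf⟩ := Finset.mem_biUnion.1 hf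
    exact (Finset.mem_filter.1 hf).1
  · intro i _ j _ hij
    change Disjoint _ _
    rw [Finset.disjoint_left]
    intro f hf hf'
    exact hij ((Finset.mem_filter.1 hf).2.2.symm.trans (Finset.mem_filter.1 hf').2.2)

end Std

section Asym

open Filter Topology

theorem poly_tendsto (Q : Polynomial ℚ) (hQ : Q ≠ 0) :
    Tendsto (fun m : ℕ => Q.eval (m : ℚ) / (m : ℚ) ^ Q.natDegree) atTop (𝓝 Q.leadingCoeff) := by
  have h := Polynomial.div_tendsto_atTop_leadingCoeff_div_of_degree_eq Q
    (Polynomial.X ^ Q.natDegree : Polynomial ℚ)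
    (by rw [Polynomial.degree_X_pow, Polynomial.degree_eq_natDegree hQ])
  have h2 := h.comp (tendsto_natCast_atTop_atTop (R := ℚ))
  simpa [Function.comp_def] using h2

theorem lead_pos (Q : Polynomial ℚ) (hQ : Q ≠ 0) (f : ℕ → ℕ)
    (hf : ∀ᶠ m : ℕ in atTop, (f m : ℚ) = Q.eval (m : ℚ)) : 0 < Q.leadingCoeff := by
  have h := poly_tendsto Q hQ
  refine lt_of_le_of_ne ?_ (Ne.symm (Polynomial.leadingCoeff_ne_zero.2 hQ))
  refine ge_of_tendsto h ?_
  filter_upwards [hf] with m hm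
  rw [← hm]
  positivity

theorem sum_not_le (Q : Polynomial ℚ) (hQ : Q ≠ 0) (f : ℕ → ℕ)
    (hf : ∀ᶠ m : ℕ in atTop, (f m : ℚ) = Q.eval (m : ℚ)) (C : ℕ)
    (hC : ∀ J : ℕ, 1 ≤ J → ∑ i ∈ Finset.range J, f i ≤ C * J ^ Q.natDegree) : False := by
  have hpos := lead_pos Q hQ f hf
  set d := Q.natDegree with hd
  set ε := Q.leadingCoeff / 2 with hε
  have hε0 : 0 < ε := by positivity
  have h1 : ∀ᶠ m : ℕ in atTop, ε < Q.eval (m : ℚ) / (m : ℚ) ^ d :=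
    (poly_tendsto Q hQ).eventually (lt_mem_nhds (by rw [hε]; linarith))
  obtain ⟨N, hN⟩ := eventually_atTop.1 (h1.and (hf.and (eventually_ge_atTop 1)))
  have hfi : ∀ i, N ≤ i → ε * (i : ℚ) ^ d ≤ f i := by
    intro i hi
    obtain ⟨a, b, c⟩ := hN i hi
    have : (0:ℚ) < (i : ℚ) ^ d := by positivity
    rw [lt_div_iff₀ this] at a
    rw [b]; exact a.le
  obtain ⟨J, hJ⟩ := exists_nat_gt (C * 2 ^ d / ε)
  set J' := max J (max N 1) with hJ'
  have hJ1 : 1 ≤ J' := by omega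
  have hJN : N ≤ J' := by omega
  have hJJ : (J : ℚ) ≤ J' := by exact_mod_cast le_max_left _ _
  have h2 : ∑ i ∈ Finset.Ico J' (2 * J'), (f i : ℚ) ≤ (C : ℚ) * (2 * J' : ℚ) ^ d := by
    have := hC (2 * J') (by omega)
    have h3 : ∑ i ∈ Finset.Ico J' (2 * J'), f i ≤ ∑ i ∈ Finset.range (2 * J'), f i := by
      apply Finset.sum_le_sum_of_subset
      intro i hi
      rw [Finset.mem_Ico] at hi
      exact Finset.mem_range.2 hi.2
    exact_mod_cast h3.trans this
  have h4 : ∑ i ∈ Finset.Ico J' (2 * J'), (ε * (J' : ℚ) ^ d) ≤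
      ∑ i ∈ Finset.Ico J' (2 * J'), (f i : ℚ) := by
    refine Finset.sum_le_sum fun i hi => ?_
    rw [Finset.mem_Ico] at hi
    refine le_trans ?_ (hfi i (by omega))
    have : (J' : ℚ) ≤ i := by exact_mod_cast hi.1
    gcongr
  rw [Finset.sum_const, Nat.card_Ico, nsmul_eq_mul] at h4
  have h5 : ((2 * J' - J' : ℕ) : ℚ) = J' := by congr 1; omega
  rw [h5] at h4
  have h6 := h4.trans h2
  rw [mul_pow] at h6
  have h7 : (0:ℚ) < (J' : ℚ) ^ d := by positivity
  have h8 : (J' : ℚ) * ε ≤ C * 2 ^ d := by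
    by_contra hcon
    push Not at hcon
    have := mul_lt_mul_of_pos_right hcon h7
    linarith
  rw [div_lt_iff₀ hε0] at hJ
  have := mul_le_mul_of_nonneg_right hJJ hε0.le
  linarith

theorem lead_int (Q : Polynomial ℚ) (f : ℕ → ℕ)
    (hf : ∀ᶠ m : ℕ in atTop, (f m : ℚ) = Q.eval (m : ℚ)) :
    ∃ z : ℤ, (Q.natDegree.factorial : ℚ) * Q.leadingCoeff = z := by
  obtain ⟨N, hN⟩ := eventually_atTop.1 hf
  have h := congrFun (Polynomial.fwdDiff_iter_degree_eq_factorial (P := Q)) (N : ℚ)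
  rw [fwdDiff_iter_eq_sum_shift] at h
  have h2 : ∀ i : ℕ, Q.eval ((N : ℚ) + i • (1:ℚ)) = f (N + i) := by
    intro i
    rw [hN (N + i) (by omega)]
    simp
  simp only [h2] at h
  refine ⟨∑ i ∈ Finset.range (Q.natDegree + 1),
    ((-1 : ℤ) ^ (Q.natDegree - i) * (Q.natDegree.choose i)) • (f (N + i) : ℤ), ?_⟩
  have h3 : (Q.natDegree.factorial : ℚ) * Q.leadingCoeff =
    (Q.leadingCoeff • (Q.natDegree.factorial : ℚ → ℚ)) (N : ℚ) := by
    simp [mul_comm]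
  rw [h3, ← h]
  simp

theorem final_asym (Q : Polynomial ℚ) (hQ : Q ≠ 0) (f : ℕ → ℕ)
    (hf : ∀ᶠ m : ℕ in atTop, (f m : ℚ) = Q.eval (m : ℚ)) (m c D : ℕ) (hm : 1 ≤ m) (hc : 1 ≤ c)
    (hD : Q.natDegree ≤ D)
    (hb : ∀ j, c * (D + j).choose D ≤ f (m * (j + 1))) :
    D = Q.natDegree ∧
      c ≤ ⌊(Q.natDegree.factorial : ℚ) * Q.leadingCoeff⌋₊ * m ^ Q.natDegree := by
  set d := Q.natDegree with hd
  have hpos := lead_pos Q hQ f hf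
  -- the basic inequality
  have h1 : ∀ i : ℕ, 1 ≤ i → (c : ℚ) * (i : ℚ) ^ D ≤ D.factorial * (f (m * i) : ℚ) := by
    intro i hi
    obtain ⟨j, rfl⟩ : ∃ j, i = j + 1 := ⟨i - 1, by omega⟩
    have h2 : (j + 1) ^ D ≤ D.factorial * (D + j).choose D := by
      have h3 := Nat.pow_succ_le_ascFactorial (j + 1) D
      rw [Nat.ascFactorial_eq_factorial_mul_choose] at h3
      rw [add_comm D j]
      exact h3
    have h3 : c * (j + 1) ^ D ≤ D.factorial * f (m * (j + 1)) := by
      calc c * (j + 1) ^ D ≤ c * (D.factorial * (D + j).choose D) := by gcongr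
        _ = D.factorial * (c * (D + j).choose D) := by ring
        _ ≤ _ := by gcongr; exact hb j
    exact_mod_cast h3
  have htm : Tendsto (fun i : ℕ => m * i) atTop atTop :=
    tendsto_id.const_mul_atTop' (by omega)
  have h2 : Tendsto (fun i : ℕ => (D.factorial : ℚ) * (m : ℚ) ^ d *
      (Q.eval ((m * i : ℕ) : ℚ) / ((m * i : ℕ) : ℚ) ^ d)) atTop
      (𝓝 ((D.factorial : ℚ) * (m : ℚ) ^ d * Q.leadingCoeff)) :=
    ((poly_tendsto Q hQ).comp htm).const_mul _
  have h3 : ∀ᶠ i : ℕ in atTop, (c : ℚ) * (i : ℚ) ^ (D - d) ≤ (D.factorial : ℚ) * (m : ℚ) ^ d *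
      (Q.eval ((m * i : ℕ) : ℚ) / ((m * i : ℕ) : ℚ) ^ d) := by
    filter_upwards [htm.eventually hf, eventually_ge_atTop 1] with i hi hi1
    rw [← hi]
    have h4 := h1 i hi1
    have hi0 : (0 : ℚ) < (i : ℚ) ^ d := by positivity
    have hm0 : (0 : ℚ) < (m : ℚ) ^ d := by positivity
    have h5 : (D.factorial : ℚ) * (m : ℚ) ^ d * ((f (m * i) : ℚ) / ((m * i : ℕ) : ℚ) ^ d) =
        (D.factorial * (f (m * i) : ℚ)) / (i : ℚ) ^ d := by
      push_cast
      rw [mul_pow]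
      field_simp
    rw [h5, le_div_iff₀ hi0, mul_assoc, ← pow_add, Nat.sub_add_cancel hD]
    exact h4
  have hDd : D = d := by
    by_contra hne
    have hlt : 1 ≤ D - d := by omega
    set L := (D.factorial : ℚ) * (m : ℚ) ^ d * Q.leadingCoeff with hL
    have h6 := h2.eventually (gt_mem_nhds (lt_add_one L))
    obtain ⟨K, hK⟩ := exists_nat_gt (L + 1)
    obtain ⟨i, ha, hb, hc1, hc2⟩ := (h3.and (h6.and ((eventually_ge_atTop K).and
      (eventually_ge_atTop 1)))).exists
    have h7 : (i : ℚ) ≤ (c : ℚ) * (i : ℚ) ^ (D - d) := by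
      have : i ≤ c * i ^ (D - d) :=
        (Nat.le_self_pow (by omega) i).trans (Nat.le_mul_of_pos_left _ hc)
      exact_mod_cast this
    have h8 : (K : ℚ) ≤ i := by exact_mod_cast hc1
    linarith
  refine ⟨hDd, ?_⟩
  subst hDd
  obtain ⟨z, hz⟩ := lead_int Q f hf
  have h9 : (c : ℚ) ≤ (d.factorial : ℚ) * (m : ℚ) ^ d * Q.leadingCoeff := by
    refine ge_of_tendsto h2 ?_
    filter_upwards [h3] with i hi
    simpa using hi
  have hz0 : 0 ≤ z := by
    have : (0 : ℚ) ≤ z := by rw [← hz]; positivity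
    exact_mod_cast this
  lift z to ℕ using hz0
  rw [← hd] at hz
  rw [hz]
  have : (c : ℚ) ≤ (z : ℚ) * (m : ℚ) ^ d := by
    have e : (d.factorial : ℚ) * (m : ℚ) ^ d * Q.leadingCoeff =
      ((d.factorial : ℚ) * Q.leadingCoeff) * (m : ℚ) ^ d := by ring
    rw [e, hz] at h9
    exact_mod_cast h9
  rw [Int.cast_natCast, Nat.floor_natCast]
  exact_mod_cast this

end Asym

section ValDim

variable {k K Γ : Type*} [Field k] [Field K] [Algebra k K] [LinearOrderedCommGroupWithZero Γ]

/-- The set of values of nonzero elements of a subspace. -/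
def vals (v : Valuation K Γ) (A : Submodule k K) : Set Γ :=
  {g | ∃ a ∈ A, a ≠ 0 ∧ v a = g}

theorem vals_finite_card (v : Valuation K Γ) (h1 : ∀ c : k, c ≠ 0 → v (algebraMap k K c) = 1)
    (h2 : ∀ x : K, v x ≤ 1 → ∃ c : k, v (x - algebraMap k K c) < 1)
    (A : Submodule k K) [FiniteDimensional k A] :
    ∃ s : Finset Γ, (∀ g, g ∈ s ↔ g ∈ vals v A) ∧ s.card = Module.finrank k A := by
  classical
  have hex : ∀ g : vals v A, ∃ a : A, (a : K) ≠ 0 ∧ v (a : K) = g := by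
    rintro ⟨g, a, ha, ha0, hag⟩
    exact ⟨⟨a, ha⟩, ha0, hag⟩
  choose r hr0 hrv using hex
  have hvs : ∀ (c : k) (x : K), c ≠ 0 → v (c • x) = v x := by
    intro c x hc
    rw [Algebra.smul_def, map_mul, h1 c hc, one_mul]
  have hg0 : ∀ g : vals v A, (g : Γ) ≠ 0 := by
    intro g
    rw [← hrv g]
    exact (Valuation.ne_zero_iff v).2 (hr0 g)
  have hli : LinearIndependent k r := by
    rw [linearIndependent_iff']
    intro s c hsum i hi
    by_contra hci
    obtain ⟨g, hg, hmax⟩ := Finset.exists_max_image (s.filter (fun j => c j ≠ 0)) (fun j => (j : Γ))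
      ⟨i, Finset.mem_filter.2 ⟨hi, hci⟩⟩
    rw [Finset.mem_filter] at hg
    have hs := congrArg (Subtype.val) hsum
    rw [← Finset.add_sum_erase _ _ hg.1] at hs
    simp only [Submodule.coe_add, Submodule.coe_smul, ZeroMemClass.coe_zero,
      AddSubmonoidClass.coe_finsetSum] at hs
    have hlt : v (∑ j ∈ s.erase g, c j • (r j : K)) < g := by
      refine Valuation.map_sum_lt v (hg0 g) ?_
      intro j hj
      rw [Finset.mem_erase] at hj
      by_cases hcj : c j = 0
      · rw [hcj, zero_smul, map_zero]
        exact zero_lt_iff.2 (hg0 g)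
      · rw [hvs _ _ hcj, hrv]
        exact lt_of_le_of_ne (hmax j (Finset.mem_filter.2 ⟨hj.2, hcj⟩))
          fun h => hj.1 (Subtype.ext h)
    have heq : c g • (r g : K) = -∑ j ∈ s.erase g, c j • (r j : K) := eq_neg_of_add_eq_zero_left hs
    have := congrArg v heq
    rw [hvs _ _ hg.2, hrv, Valuation.map_neg] at this
    rw [← this] at hlt
    exact lt_irrefl _ hlt
  have hfin : Finite (vals v A) := hli.finite
  have hspan : ⊤ ≤ Submodule.span k (Set.range r) := by
    have key : ∀ g : vals v A, ∀ a : A, (a : K) ≠ 0 → v (a : K) = g →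
        a ∈ Submodule.span k (Set.range r) := by
      intro g
      induction g using WellFoundedLT.induction with
      | ind g ih =>
        intro a ha0 hag
        have hr : v ((a : K) / r g) ≤ 1 := by
          rw [map_div₀, hag, hrv, div_self (hg0 g)]
        obtain ⟨c, hc⟩ := h2 _ hr
        have hlt : v ((a : K) - c • (r g : K)) < g := by
          have e : (a : K) - c • (r g : K) = ((a : K) / r g - algebraMap k K c) * r g := by
            rw [sub_mul, div_mul_cancel₀ _ (hr0 g), Algebra.smul_def]
          rw [e, map_mul, hrv]
          calc _ < 1 * (g : Γ) := mul_lt_mul_of_pos_right hc (zero_lt_iff.2 (hg0 g))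
            _ = g := one_mul _
        have hmem : a - c • r g ∈ Submodule.span k (Set.range r) := by
          by_cases hz : ((a - c • r g : A) : K) = 0
          · have : a - c • r g = 0 := Subtype.ext hz
            rw [this]; exact Submodule.zero_mem _
          · exact ih ⟨v ((a - c • r g : A) : K), _, (a - c • r g).2, hz, rfl⟩ hlt _ hz rfl
        have := Submodule.add_mem _ hmem
          (Submodule.smul_mem _ c (Submodule.subset_span ⟨g, rfl⟩))
        rwa [sub_add_cancel] at this
    intro a _
    by_cases ha : (a : K) = 0
    · have : a = 0 := Subtype.ext ha
      rw [this]; exact Submodule.zero_mem _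
    · exact key ⟨v a, a, a.2, ha, rfl⟩ a ha rfl
  have hfin' : (vals v A).Finite := hfin
  have : Fintype (vals v A) := Fintype.ofFinite _
  refine ⟨hfin'.toFinset, fun g => hfin'.mem_toFinset, ?_⟩
  rw [Module.finrank_eq_card_basis (Module.Basis.mk hli hspan), ← Set.ncard_eq_toFinset_card _ hfin',
    Set.ncard_eq_toFinset_card', Set.toFinset_card]

open Classical in
/-- Additive rational version of the value. -/
noncomputable def omg (g : Γ) : DivisibleHull (Additive Γˣ) :=
  if h : g = 0 then 0 else
    DivisibleHull.coeAddMonoidHom (Additive Γˣ) (Additive.ofMul (Units.mk0 g h))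

theorem omg_mul {g h : Γ} (hg : g ≠ 0) (hh : h ≠ 0) : omg (g * h) = omg g + omg h := by
  rw [omg, omg, omg, dif_neg hg, dif_neg hh, dif_neg (mul_ne_zero hg hh), ← map_add,
    ← ofMul_mul, Units.mk0_mul]

theorem omg_inj {g h : Γ} (hg : g ≠ 0) (hh : h ≠ 0) (e : omg g = omg h) : g = h := by
  rw [omg, omg, dif_neg hg, dif_neg hh] at e
  have := DivisibleHull.coe_injective e
  have := Additive.ofMul.injective this
  exact congrArg Units.val this

theorem omg_one : omg (1 : Γ) = 0 := by
  have := omg_mul (one_ne_zero (α := Γ)) one_ne_zero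
  rw [mul_one] at this
  exact left_eq_add.1 this

theorem omg_zpow {g : Γ} (hg : g ≠ 0) (n : ℤ) : omg (g ^ n) = n • omg g := by
  have hh : ∀ n : ℤ, omg (g ^ n) = DivisibleHull.coeAddMonoidHom (Additive Γˣ)
      (Additive.ofMul ((Units.mk0 g hg) ^ n)) := by
    intro n
    rw [omg, dif_neg (zpow_ne_zero n hg)]
    congr 2
    ext
    simp
  rw [hh, ofMul_zpow, map_zsmul, omg, dif_neg hg]

theorem omg_prod {ι : Type*} (s : Finset ι) (f : ι → Γ) (hf : ∀ i, f i ≠ 0) :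
    omg (∏ i ∈ s, f i) = ∑ i ∈ s, omg (f i) := by
  classical
  induction s using Finset.induction_on with
  | empty => simp [omg_one]
  | insert a s ha ih =>
    rw [Finset.prod_insert ha, Finset.sum_insert ha,
      omg_mul (hf a) (Finset.prod_ne_zero_iff.2 fun i _ => hf i), ih]

theorem freiman_val (v : Valuation K Γ) (h1 : ∀ c : k, c ≠ 0 → v (algebraMap k K c) = 1)
    (h2 : ∀ x : K, v x ≤ 1 → ∃ c : k, v (x - algebraMap k K c) < 1)
    (A : ℕ → Submodule k K) (hA : ∀ j, FiniteDimensional k (A j)) (hone : (1 : K) ∈ A 0)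
    (hmul : ∀ i j, ∀ a ∈ A i, ∀ b ∈ A j, a * b ∈ A (i + j)) (m d : ℕ)
    {T : Type*} [Fintype T] (z : T → K) (hz0 : ∀ i, z i ≠ 0) (hzA : ∀ i, z i ∈ A m)
    (hind : ∀ n : T → ℤ, v (∏ i, z i ^ n i) = 1 → n = 0) (hT : Fintype.card T = d + 1) :
    ∃ c D : ℕ, d ≤ D ∧ 1 ≤ c ∧ Module.finrank k (A m) = c + D ∧
      ∀ j, c * (D + j).choose D ≤ Module.finrank k (A (m * (j + 1))) := by
  classical
  choose s hs hcard using fun j => vals_finite_card v h1 h2 (A j)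
  have hs0 : ∀ j, ∀ g ∈ s j, g ≠ 0 := by
    intro j g hg
    obtain ⟨a, _, ha0, rfl⟩ := (hs j g).1 hg
    exact (Valuation.ne_zero_iff v).2 ha0
  let S : Finset (DivisibleHull (Additive Γˣ) × ℚ) := (s m).image (fun g => (omg g, (1:ℚ)))
  have hScard : S.card = Module.finrank k (A m) := by
    rw [← hcard m]
    refine Finset.card_image_of_injOn ?_
    intro g hg h hh e
    exact omg_inj (hs0 m g hg) (hs0 m h hh) (Prod.ext_iff.1 e).1
  have hS1 : ∀ x ∈ S, (LinearMap.snd ℚ (DivisibleHull (Additive Γˣ)) ℚ) x = 1 := by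
    intro x hx
    obtain ⟨g, _, rfl⟩ := Finset.mem_image.1 hx
    rfl
  have hSj : ∀ j, sset S j ⊆ (s (m * j)).image (fun g => (omg g, (j:ℚ))) := by
    intro j
    induction j with
    | zero =>
      intro x hx
      simp only [sset, Finset.mem_singleton] at hx
      subst hx
      refine Finset.mem_image.2 ⟨1, (hs _ _).2 ⟨1, ?_, one_ne_zero, map_one v⟩, ?_⟩
      · rw [mul_zero]; exact hone
      · rw [omg_one]; simp
    | succ j ih =>
      intro x hx
      obtain ⟨x1, hx1, x2, hx2, rfl⟩ := mem_sset_succ.1 hx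
      obtain ⟨g, hg, rfl⟩ := Finset.mem_image.1 hx1
      obtain ⟨h, hh, rfl⟩ := Finset.mem_image.1 (ih hx2)
      refine Finset.mem_image.2 ⟨g * h, ?_, ?_⟩
      · obtain ⟨a, ha, ha0, rfl⟩ := (hs _ _).1 hg
        obtain ⟨b, hb, hb0, rfl⟩ := (hs _ _).1 hh
        refine (hs _ _).2 ⟨a * b, ?_, mul_ne_zero ha0 hb0, map_mul v a b⟩
        have := hmul _ _ a ha b hb
        rwa [show m + m * j = m * (j + 1) by ring] at this
      · rw [omg_mul (hs0 _ _ hg) (hs0 _ _ hh)]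
        simp [add_comm]
  have hSjcard : ∀ j, (sset S j).card ≤ Module.finrank k (A (m * j)) := by
    intro j
    rw [← hcard]
    exact (Finset.card_le_card (hSj j)).trans Finset.card_image_le
  have hv0 : ∀ i, v (z i) ≠ 0 := fun i => (Valuation.ne_zero_iff v).2 (hz0 i)
  have hliZ : LinearIndependent ℤ (fun i => omg (v (z i))) := by
    rw [Fintype.linearIndependent_iff]
    intro n hn i
    refine congrFun (hind n ?_) i
    have hne : ∀ i, v (z i ^ n i) ≠ 0 := fun i =>
      (Valuation.ne_zero_iff v).2 (zpow_ne_zero _ (hz0 i))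
    rw [map_prod]
    refine omg_inj (Finset.prod_ne_zero_iff.2 fun i _ => hne i) one_ne_zero ?_
    rw [omg_prod _ _ hne, omg_one, ← hn]
    refine Finset.sum_congr rfl fun i _ => ?_
    rw [map_zpow₀, omg_zpow (hv0 i)]
  have hliQ : LinearIndependent ℚ (fun i => omg (v (z i))) :=
    (LinearIndependent.iff_fractionRing ℤ ℚ).1 hliZ
  have hli : LinearIndependent ℚ (fun i => (omg (v (z i)), (1:ℚ))) :=
    LinearIndependent.of_comp (LinearMap.fst ℚ (DivisibleHull (Additive Γˣ)) ℚ) hliQ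
  have hrank : d + 1 ≤ Module.finrank ℚ (Submodule.span ℚ (S : Set (DivisibleHull (Additive Γˣ) × ℚ))) := by
    rw [← hT, ← finrank_span_eq_card hli]
    refine Submodule.finrank_mono (Submodule.span_mono ?_)
    rintro _ ⟨i, rfl⟩
    exact Finset.mem_coe.2 (Finset.mem_image.2 ⟨_, (hs _ _).2 ⟨z i, hzA i, hz0 i, rfl⟩, rfl⟩)
  have hrank2 : Module.finrank ℚ (Submodule.span ℚ (S : Set (DivisibleHull (Additive Γˣ) × ℚ))) ≤ S.card :=
    finrank_span_finset_le_card S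
  obtain ⟨D, hD⟩ : ∃ D, Module.finrank ℚ (Submodule.span ℚ (S : Set (DivisibleHull (Additive Γˣ) × ℚ))) = D + 1 :=
    ⟨_, (Nat.sub_add_cancel (by omega : 1 ≤ _)).symm⟩
  obtain ⟨c, hc⟩ : ∃ c, S.card = c + D := ⟨_, (Nat.sub_add_cancel (by omega : D ≤ _)).symm⟩
  refine ⟨c, D, by omega, by omega, by omega, fun j => ?_⟩
  exact (freiman (LinearMap.snd ℚ _ ℚ) S.card S rfl hS1 D c hD hc j).trans (hSjcard _)

end ValDim

section Final

variable {k : Type*} [Field k] {n : ℕ} (P : Ideal (MvPolynomial (Fin (n+1)) k))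

theorem qpiece_finite (j : ℕ) : FiniteDimensional k (qpiece P j) := by
  have hfin : (qmon P '' {b | IsStd P b ∧ b.degree = j}).Finite := by
    refine Set.Finite.image _ ((Finsupp.finite_of_degree_le (σ := Fin (n+1)) j).subset ?_)
    rintro b ⟨_, hb⟩
    exact hb.le
  have : FiniteDimensional k (Submodule.span k (qmon P '' {b | IsStd P b ∧ b.degree = j})) :=
    FiniteDimensional.span_of_finite k hfin
  exact Submodule.finiteDimensional_of_le (qpiece_le P j)

theorem qpiece_mul {i j : ℕ} {a b : MvPolynomial (Fin (n+1)) k ⧸ P} (ha : a ∈ qpiece P i)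
    (hb : b ∈ qpiece P j) : a * b ∈ qpiece P (i + j) := by
  obtain ⟨f, hf, rfl⟩ := ha
  obtain ⟨g, hg, rfl⟩ := hb
  exact ⟨f * g, IsHomogeneous.mul hf hg, map_mul (Ideal.Quotient.mkₐ k P) f g⟩

theorem exists_std (Q : Polynomial ℚ) (hQ : Q ≠ 0)
    (hf : ∀ᶠ m : ℕ in Filter.atTop, (hilbF k P m : ℚ) = Q.eval (m : ℚ)) :
    ∃ T : Finset (Fin (n+1)), T.card = Q.natDegree + 1 ∧
      ∀ a : Fin (n+1) →₀ ℕ, a.support ⊆ T → IsStd P a := by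
  by_contra hcon
  push Not at hcon
  obtain ⟨C, hC⟩ := sum_hilb_le P Q.natDegree hcon
  exact sum_not_le Q hQ _ hf C hC

theorem core_bound [IsAlgClosed k] (hprime : P.IsPrime) (hhom : IsHomogeneousIdeal P)
    (Q : Polynomial ℚ) (hQ : Q ≠ 0)
    (hf : ∀ᶠ m : ℕ in Filter.atTop, (hilbF k P m : ℚ) = Q.eval (m : ℚ)) (m : ℕ) (hm : 1 ≤ m) :
    hilbF k P m ≤ ⌊(Q.natDegree.factorial : ℚ) * Q.leadingCoeff⌋₊ * m ^ Q.natDegree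
      + Q.natDegree := by
  classical
  obtain ⟨T, hTc, hT⟩ := exists_std P Q hQ hf
  have hai := algInd_of_std P hhom T hT
  let R := MvPolynomial (Fin (n+1)) k ⧸ P
  let K := FractionRing R
  let φ : R →ₐ[k] K := IsScalarTower.toAlgHom k R K
  have hφ : Function.Injective φ := IsFractionRing.injective R K
  have haiK : AlgebraicIndependent k (fun i : T => φ (Ideal.Quotient.mkₐ k P (X (i : Fin (n+1))))) :=
    hai.map' hφ
  obtain ⟨B, h1, h2, h3⟩ := exists_good_valuation _ haiK
  let A : ℕ → Submodule k K := fun j => (qpiece P j).map φ.toLinearMap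
  have hAfin : ∀ j, FiniteDimensional k (A j) := by
    intro j
    have := qpiece_finite P j
    change FiniteDimensional k ((qpiece P j).map φ.toLinearMap)
    infer_instance
  have hAr : ∀ j, Module.finrank k (A j) = hilbF k P j := by
    intro j
    exact (LinearEquiv.finrank_eq (Submodule.equivMapOfInjective φ.toLinearMap hφ (qpiece P j))).symm
  have hx0 : ∀ i : T, φ (Ideal.Quotient.mkₐ k P (X (i : Fin (n+1)))) ≠ 0 := fun i => haiK.ne_zero i
  obtain ⟨c, D, hD, hc, hcD, hb⟩ := freiman_val B.valuation h1 h2 A hAfin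
    ⟨1, ⟨1, isHomogeneous_one _ _, map_one (Ideal.Quotient.mkₐ k P)⟩, map_one φ⟩
    (by
      rintro i j _ ⟨a, ha, rfl⟩ _ ⟨b, hb, rfl⟩
      exact ⟨a * b, qpiece_mul P ha hb, map_mul φ a b⟩)
    m Q.natDegree (T := T) (fun i => φ (Ideal.Quotient.mkₐ k P (X (i : Fin (n+1)))) ^ m)
    (fun i => pow_ne_zero _ (hx0 i))
    (by
      intro i
      refine ⟨Ideal.Quotient.mkₐ k P (X (i : Fin (n+1))) ^ m, ⟨X (i : Fin (n+1)) ^ m, ?_, ?_⟩, ?_⟩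
      · have := (isHomogeneous_X k (i : Fin (n+1))).pow m
        rw [one_mul] at this
        exact this
      · exact map_pow (Ideal.Quotient.mkₐ k P) _ _
      · exact map_pow φ _ _)
    (by
      intro e he
      have h4 := h3 (Finsupp.equivFunOnFinite.symm (fun i => (m : ℤ) * e i)) (by
        rw [Finsupp.prod_fintype _ _ (fun i => zpow_zero _), ← he]
        congr 1
        refine Finset.prod_congr rfl fun i _ => ?_
        rw [← zpow_natCast, ← zpow_mul]
        rfl)
      funext i
      have h5 := DFunLike.congr_fun h4 i
      have h6 : (m : ℤ) * e i = 0 := h5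
      rcases mul_eq_zero.1 h6 with h | h
      · omega
      · exact h)
    (by rw [Fintype.card_coe, hTc])
  rw [hAr] at hcD
  simp only [hAr] at hb
  obtain ⟨hDd, hcle⟩ := final_asym Q hQ _ hf m c D hm hc hD hb
  rw [hcD, hDd]
  exact Nat.add_le_add_right hcle _

end Final

/-- upper bound `h_V(m) ≤ deg V · m^d + d` for the Hilbert function
of an irreducible projective variety of dimension `d` (equivalently, of a
relevant homogeneous prime ideal `P` of projective dimension `d`). -/
theorem hilbert_function_irreducible_upper_bound {k : Type*} [Field k] [IsAlgClosed k]
    {n d : ℕ} (P : Ideal (MvPolynomial (Fin (n+1)) k)) (hprime : P.IsPrime)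
    (hhom : IsHomogeneousIdeal P) (hne : hilbP k P ≠ 0) (hdim : idealDim k P = d) :
    ∀ m : ℕ, 1 ≤ m → hilbF k P m ≤ idealDeg k P * m ^ d + d := by
  classical
  have hex : ∃ Q : Polynomial ℚ, ∀ᶠ m : ℕ in Filter.atTop,
      (hilbF k P m : ℚ) = Q.eval (m : ℚ) := by
    by_contra h
    exact hne (by rw [hilbP, dif_neg h])
  have hspec : ∀ᶠ m : ℕ in Filter.atTop, (hilbF k P m : ℚ) = (hilbP k P).eval (m : ℚ) := by
    rw [hilbP, dif_pos hex]
    exact hex.choose_spec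
  intro m hm
  have h := core_bound P hprime hhom (hilbP k P) hne hspec m hm
  rw [idealDim] at hdim
  rw [idealDeg, ← hdim]
  exact h
end
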